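/- For every λ > 0 there exists a unique C³ function p : T → ℝ satisfying the kernel equation p_{xxx} + p_{yyy} + p_x + p_y = λp on T together with the boundary conditions p(x,x) = 0 and p_x(x,x) = (λ/3)x for all x ∈ [0,1], and p(0,y) = 0 for all y ∈ [0,1]. -/

import Mathlib

open MeasureTheory

noncomputable section

/-- The closed triangle `T = {(x, y) : 0 ≤ x ≤ y ≤ 1}`. -/
def T : Set (ℝ × ℝ) := {q : ℝ × ℝ | 0 ≤ q.1 ∧ q.1 ≤ q.2 ∧ q.2 ≤ 1}

/-- Partial derivative in the first variable. -/
def pdx (f : ℝ → ℝ → ℝ) (x y : ℝ) : ℝ := deriv (fun x' => f x' y) x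

/-- Partial derivative in the second variable. -/
def pdy (f : ℝ → ℝ → ℝ) (x y : ℝ) : ℝ := deriv (fun y' => f x y') y

/-- An observer kernel for `lam`: a C³ function with
`p_xxx + p_yyy + p_x + p_y = lam p` on `T`, `p(x,x)=0`, `p_x(x,x) = (lam/3)x`,
`p(0,y)=0`. -/
def IsObserverKernel (lam : ℝ) (p : ℝ → ℝ → ℝ) : Prop :=
  ContDiff ℝ 3 (Function.uncurry p) ∧
  (∀ x y : ℝ, (x, y) ∈ T →
    pdx (pdx (pdx p)) x y + pdy (pdy (pdy p)) x y + pdx p x y + pdy p x y = lam * p x y) ∧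
  (∀ x ∈ Set.Icc (0:ℝ) 1, p x x = 0) ∧
  (∀ x ∈ Set.Icc (0:ℝ) 1, pdx p x x = lam / 3 * x) ∧
  (∀ y ∈ Set.Icc (0:ℝ) 1, p 0 y = 0)

open Set Filter Topology Function

/-!
Every plane wave `exp (a x + b y)` with `a³ + b³ + a + b = λ` solves the kernel equation, and the
curve of such frequencies is parametrized by `a = z² - ρ(z)`, `b = z² + ρ(z)`, where
`z² ρ² = λ/6 - z²/3 - z⁶/3`. A solution is therefore obtained by superposing these waves over a
small circle `|z| = r`. With density `ρ' + 2 z` the integrand is an exact derivative on the side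
`x = 0`, and an exact derivative plus a simple pole at `z = 0` on the diagonal, where Cauchy's
formula evaluates it.

For uniqueness, write the equation in `s = x + y`, `t = y - x`: the difference `d` of two kernels
solves `∂s(2∂s² + 6∂t² + 2) d = λ d` with zero Cauchy data on `t = 0`. Let `g(t) = d(1, t)`.
Subtracting from `d` a function `g + V`, where `V` is an explicit Volterra integral of `g`, leaves a
function whose derivative `H` in `s` satisfies a second-order elliptic equation, up to a term
`∫₁ˢ H`, with zero Cauchy data on `t = 0`. A Carleman estimate, whose weight is adapted to that
nonlocal term, gives `H = 0`. Hence `d = g + V` is determined by `g`, and its vanishing on the side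
`s = t` is a homogeneous Volterra equation for `g`, so `g = 0` and `d = 0`.
-/

/-! ### Partial derivatives -/

section PartialDerivatives

variable {f g : ℝ → ℝ → ℝ}

theorem hasDerivAt_pdx (hf : Differentiable ℝ (uncurry f)) (x y : ℝ) :
    HasDerivAt (fun x' => f x' y) (pdx f x y) x :=
  (hf.comp (g := uncurry f) (differentiable_id.prodMk (differentiable_const y)) x).hasDerivAt

theorem hasDerivAt_pdy (hf : Differentiable ℝ (uncurry f)) (x y : ℝ) :
    HasDerivAt (fun y' => f x y') (pdy f x y) y :=
  (hf.comp (g := uncurry f) ((differentiable_const x).prodMk differentiable_id) y).hasDerivAt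

theorem pdx_add (hf : Differentiable ℝ (uncurry f)) (hg : Differentiable ℝ (uncurry g)) :
    pdx (f + g) = pdx f + pdx g :=
  funext₂ fun x y => ((hasDerivAt_pdx hf x y).add (hasDerivAt_pdx hg x y)).deriv

theorem pdy_add (hf : Differentiable ℝ (uncurry f)) (hg : Differentiable ℝ (uncurry g)) :
    pdy (f + g) = pdy f + pdy g :=
  funext₂ fun x y => ((hasDerivAt_pdy hf x y).add (hasDerivAt_pdy hg x y)).deriv

theorem pdx_sub (hf : Differentiable ℝ (uncurry f)) (hg : Differentiable ℝ (uncurry g)) :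
    pdx (f - g) = pdx f - pdx g :=
  funext₂ fun x y => ((hasDerivAt_pdx hf x y).sub (hasDerivAt_pdx hg x y)).deriv

theorem pdy_sub (hf : Differentiable ℝ (uncurry f)) (hg : Differentiable ℝ (uncurry g)) :
    pdy (f - g) = pdy f - pdy g :=
  funext₂ fun x y => ((hasDerivAt_pdy hf x y).sub (hasDerivAt_pdy hg x y)).deriv

theorem uncurry_pdx_eq_fderiv (hf : Differentiable ℝ (uncurry f)) :
    uncurry (pdx f) = fun q => fderiv ℝ (uncurry f) q (1, 0) :=
  funext fun q => (HasFDerivAt.comp_hasDerivAt (f := fun x => (x, q.2)) q.1 (hf q).hasFDerivAt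
    ((hasDerivAt_id q.1).prodMk (hasDerivAt_const q.1 q.2))).deriv

theorem uncurry_pdy_eq_fderiv (hf : Differentiable ℝ (uncurry f)) :
    uncurry (pdy f) = fun q => fderiv ℝ (uncurry f) q (0, 1) :=
  funext fun q => (HasFDerivAt.comp_hasDerivAt (f := fun y => (q.1, y)) q.2 (hf q).hasFDerivAt
    ((hasDerivAt_const q.2 q.1).prodMk (hasDerivAt_id q.2))).deriv

theorem contDiff_pdx {m n : WithTop ℕ∞} (hf : ContDiff ℝ n (uncurry f)) (hmn : m + 1 ≤ n) :
    ContDiff ℝ m (uncurry (pdx f)) := by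
  rw [uncurry_pdx_eq_fderiv (hf.differentiable (by rintro rfl; simp at hmn))]
  exact (hf.fderiv_right hmn).clm_apply contDiff_const

theorem contDiff_pdy {m n : WithTop ℕ∞} (hf : ContDiff ℝ n (uncurry f)) (hmn : m + 1 ≤ n) :
    ContDiff ℝ m (uncurry (pdy f)) := by
  rw [uncurry_pdy_eq_fderiv (hf.differentiable (by rintro rfl; simp at hmn))]
  exact (hf.fderiv_right hmn).clm_apply contDiff_const

theorem differentiable_pdx (hf : ContDiff ℝ 2 (uncurry f)) : Differentiable ℝ (uncurry (pdx f)) :=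
  (contDiff_pdx (m := 1) hf le_rfl).differentiable one_ne_zero

theorem differentiable_pdy (hf : ContDiff ℝ 2 (uncurry f)) : Differentiable ℝ (uncurry (pdy f)) :=
  (contDiff_pdy (m := 1) hf le_rfl).differentiable one_ne_zero

theorem pdx_pdy_comm (hf : ContDiff ℝ 2 (uncurry f)) : pdx (pdy f) = pdy (pdx f) := by
  have hd : Differentiable ℝ (uncurry f) := hf.differentiable two_ne_zero
  have hd' : Differentiable ℝ (fderiv ℝ (uncurry f)) :=
    (hf.fderiv_right (m := 1) le_rfl).differentiable one_ne_zero
  have second (v w q : ℝ × ℝ) : fderiv ℝ (fun q => fderiv ℝ (uncurry f) q v) q w =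
      fderiv ℝ (fderiv ℝ (uncurry f)) q w v := by
    simp [fderiv_clm_apply (hd' q) (differentiableAt_const v)]
  refine uncurry_injective (funext fun q => ?_)
  rw [uncurry_pdx_eq_fderiv (differentiable_pdy hf),
    uncurry_pdy_eq_fderiv (differentiable_pdx hf),
    uncurry_pdx_eq_fderiv hd, uncurry_pdy_eq_fderiv hd]
  simp only [second]
  exact hf.contDiffAt.isSymmSndFDerivAt (by simp) _ _

theorem contDiff_succ_of_partials {f₁ f₂ : ℝ → ℝ → ℝ} {n : ℕ}
    (h₁ : ∀ x y, HasDerivAt (fun x' => f x' y) (f₁ x y) x)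
    (h₂ : ∀ x y, HasDerivAt (fun y' => f x y') (f₂ x y) y)
    (c₁ : ContDiff ℝ n (uncurry f₁)) (c₂ : ContDiff ℝ n (uncurry f₂)) :
    ContDiff ℝ (n + 1) (uncurry f) := by
  let L : ℝ → ℝ →L[ℝ] ℝ := ContinuousLinearMap.toSpanSingletonCLE (𝕜 := ℝ)
  have hL {m : WithTop ℕ∞} {g : ℝ × ℝ → ℝ} (hg : ContDiff ℝ m g) :
      ContDiff ℝ m fun q => L (g q) :=
    (ContinuousLinearMap.toSpanSingletonCLE (𝕜 := ℝ) (E := ℝ)).contDiff.comp hg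
  refine contDiff_succ_iff_hasFDerivAt.2
    ⟨fun q => (L (f₁ q.1 q.2)).coprod (L (f₂ q.1 q.2)), ?_, fun q => ?_⟩
  · exact (ContinuousLinearMap.coprodEquivL (𝕜 := ℝ) ℝ).contDiff.comp ((hL c₁).prodMk (hL c₂))
  · exact (hasStrictFDerivAt_uncurry_coprod (f₁ := fun x y => L (f₁ x y))
      (f₂ := fun x y => L (f₂ x y))
      (Eventually.of_forall fun v => (h₁ v.1 v.2).hasFDerivAt)
      (Eventually.of_forall fun v => (h₂ v.1 v.2).hasFDerivAt)
      (hL c₁).continuous.continuousAt (hL c₂).continuous.continuousAt).hasFDerivAt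

theorem hasDerivAt_comp_curve (hf : Differentiable ℝ (uncurry f)) {γ δ : ℝ → ℝ} {γ' δ' r : ℝ}
    (hγ : HasDerivAt γ γ' r) (hδ : HasDerivAt δ δ' r) :
    HasDerivAt (fun r => f (γ r) (δ r))
      (γ' * pdx f (γ r) (δ r) + δ' * pdy f (γ r) (δ r)) r := by
  have h := HasFDerivAt.comp_hasDerivAt (f := fun r => (γ r, δ r)) r
    (hf (γ r, δ r)).hasFDerivAt (hγ.prodMk hδ)
  have hvec : (γ', δ') = γ' • ((1 : ℝ), (0 : ℝ)) + δ' • ((0 : ℝ), (1 : ℝ)) := by simp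
  rwa [hvec, map_add, map_smul, map_smul, ← congrFun (uncurry_pdx_eq_fderiv hf) (γ r, δ r),
    ← congrFun (uncurry_pdy_eq_fderiv hf) (γ r, δ r)] at h

end PartialDerivatives

/-! ### Characteristic variables -/

/-- `f` in the variables `s = x + y`, `t = y - x`, in which `∂x + ∂y = 2∂s`. -/
def rotated (f : ℝ → ℝ → ℝ) (s t : ℝ) : ℝ := f ((s - t) / 2) ((s + t) / 2)

section Rotated

variable {f g : ℝ → ℝ → ℝ}

theorem contDiff_rotated {n : WithTop ℕ∞} (hf : ContDiff ℝ n (uncurry f)) :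
    ContDiff ℝ n (uncurry (rotated f)) :=
  hf.comp (g := uncurry f) (f := fun q : ℝ × ℝ => ((q.1 - q.2) / 2, (q.1 + q.2) / 2))
    (by fun_prop)

theorem pdx_rotated (hf : Differentiable ℝ (uncurry f)) (s t : ℝ) :
    pdx (rotated f) s t = (rotated (pdx f) s t + rotated (pdy f) s t) / 2 := by
  have h := hasDerivAt_comp_curve hf (((hasDerivAt_id s).sub_const t).div_const 2)
    (((hasDerivAt_id s).add_const t).div_const 2)
  exact h.deriv.trans (by simp only [rotated, id]; ring)

theorem pdy_rotated (hf : Differentiable ℝ (uncurry f)) (s t : ℝ) :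
    pdy (rotated f) s t = (rotated (pdy f) s t - rotated (pdx f) s t) / 2 := by
  have h := hasDerivAt_comp_curve hf (((hasDerivAt_id t).const_sub s).div_const 2)
    (((hasDerivAt_id t).const_add s).div_const 2)
  exact h.deriv.trans (by simp only [rotated, id]; ring)

theorem rotated_pdx (hf : Differentiable ℝ (uncurry f)) :
    rotated (pdx f) = pdx (rotated f) - pdy (rotated f) := by
  funext s t
  simp only [Pi.sub_apply, pdx_rotated hf, pdy_rotated hf]
  ring

theorem rotated_pdy (hf : Differentiable ℝ (uncurry f)) :
    rotated (pdy f) = pdx (rotated f) + pdy (rotated f) := by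
  funext s t
  simp only [Pi.add_apply, pdx_rotated hf, pdy_rotated hf]
  ring

theorem rotated_pdx_pdx (hf : ContDiff ℝ 2 (uncurry f)) :
    rotated (pdx (pdx f)) =
      pdx (pdx (rotated f)) + pdy (pdy (rotated f)) -
        (pdx (pdy (rotated f)) + pdx (pdy (rotated f))) := by
  have hf' := contDiff_rotated hf
  have hx := differentiable_pdx hf'
  have hy := differentiable_pdy hf'
  rw [rotated_pdx (differentiable_pdx hf),
    rotated_pdx (hf.differentiable two_ne_zero), pdx_sub hx hy, pdy_sub hx hy, pdx_pdy_comm hf']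
  ring

theorem rotated_pdy_pdy (hf : ContDiff ℝ 2 (uncurry f)) :
    rotated (pdy (pdy f)) =
      pdx (pdx (rotated f)) + pdy (pdy (rotated f)) +
        (pdx (pdy (rotated f)) + pdx (pdy (rotated f))) := by
  have hf' := contDiff_rotated hf
  have hx := differentiable_pdx hf'
  have hy := differentiable_pdy hf'
  rw [rotated_pdy (differentiable_pdy hf),
    rotated_pdy (hf.differentiable two_ne_zero), pdx_add hx hy, pdy_add hx hy, pdx_pdy_comm hf']
  ring

theorem rotated_sum_cubes (hf : ContDiff ℝ 3 (uncurry f)) :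
    rotated (pdx (pdx (pdx f))) + rotated (pdy (pdy (pdy f))) =
      2 * pdx (pdx (pdx (rotated f))) + 6 * pdx (pdy (pdy (rotated f))) := by
  have hf2 : ContDiff ℝ 2 (uncurry f) := hf.of_le (by norm_num)
  have hg := contDiff_rotated hf
  have hx : ContDiff ℝ 2 (uncurry (pdx (rotated f))) := contDiff_pdx hg (by norm_num)
  have hy : ContDiff ℝ 2 (uncurry (pdy (rotated f))) := contDiff_pdy hg (by norm_num)
  have hxy := differentiable_pdx hy
  have hsum : Differentiable ℝ (uncurry (pdx (pdx (rotated f)) + pdy (pdy (rotated f)))) :=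
    (differentiable_pdx hx).add (differentiable_pdy hy)
  have hmix : Differentiable ℝ (uncurry (pdx (pdy (rotated f)) + pdx (pdy (rotated f)))) :=
    hxy.add hxy
  rw [rotated_pdx (differentiable_pdx (contDiff_pdx hf (by norm_num))),
    rotated_pdy (differentiable_pdy (contDiff_pdy hf (by norm_num))),
    rotated_pdx_pdx hf2, rotated_pdy_pdy hf2, pdx_sub hsum hmix, pdy_sub hsum hmix,
    pdx_add hsum hmix, pdy_add hsum hmix, pdx_add (differentiable_pdx hx) (differentiable_pdy hy),
    pdy_add hxy hxy, ← pdx_pdy_comm hy]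
  ring

theorem kernelEquation_rotated {lam s t : ℝ} (hf : ContDiff ℝ 3 (uncurry f))
    (h : rotated (pdx (pdx (pdx f))) s t + rotated (pdy (pdy (pdy f))) s t + rotated (pdx f) s t +
      rotated (pdy f) s t = lam * rotated f s t) :
    2 * pdx (pdx (pdx (rotated f))) s t + 6 * pdx (pdy (pdy (rotated f))) s t +
      2 * pdx (rotated f) s t = lam * rotated f s t := by
  have hd : Differentiable ℝ (uncurry f) := hf.differentiable three_ne_zero
  have hcubes := congrFun₂ (rotated_sum_cubes hf) s t
  have hx := congrFun₂ (rotated_pdx hd) s t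
  have hy := congrFun₂ (rotated_pdy hd) s t
  simp only [Pi.add_apply, Pi.mul_apply, Pi.sub_apply, Pi.ofNat_apply] at hcubes hx hy
  linear_combination h - hcubes - hx - hy

end Rotated

/-! ### Differentiation under the integral sign -/

section ParametricIntegrals

variable {E X : Type*} [NormedAddCommGroup E] [TopologicalSpace X]

theorem hasDerivAt_intervalIntegral_of_continuous [NormedSpace ℝ E] {F F' : ℝ → ℝ → E}
    (hF : Continuous (uncurry F)) (hF' : Continuous (uncurry F'))
    (h : ∀ x θ, HasDerivAt (fun x' => F x' θ) (F' x θ) x) (a b x : ℝ) :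
    HasDerivAt (fun x' => ∫ θ in a..b, F x' θ) (∫ θ in a..b, F' x θ) x := by
  obtain ⟨C, hC⟩ := ((isCompact_Icc (a := x - 1) (b := x + 1)).prod
    (isCompact_uIcc (a := a) (b := b))).exists_bound_of_continuousOn hF'.continuousOn
  refine (intervalIntegral.hasDerivAt_integral_of_dominated_loc_of_deriv_le
    (s := Icc (x - 1) (x + 1)) (bound := fun _ => C) (Icc_mem_nhds (by linarith) (by linarith))
    (Eventually.of_forall fun x' => ?_) ?_ ?_ (ae_of_all _ fun θ hθ x' hx' => ?_) (by simp)
    (ae_of_all _ fun θ _ x' _ => h x' θ)).2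
  · exact (hF.comp (Continuous.prodMk_right x')).aestronglyMeasurable
  · exact (hF.comp (Continuous.prodMk_right x)).intervalIntegrable _ _
  · exact (hF'.comp (Continuous.prodMk_right x)).aestronglyMeasurable
  · exact hC (x', θ) ⟨hx', uIoc_subset_uIcc hθ⟩

variable [NormedSpace ℂ E]

theorem continuous_circleMap_smul {F : X → ℂ → E} {c : ℂ} {r : ℝ} (hr : 0 ≤ r)
    (hF : ContinuousOn (uncurry F) (univ ×ˢ Metric.sphere c r)) :
    Continuous (uncurry fun x θ => deriv (circleMap c r) θ • F x (circleMap c r θ)) := by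
  have hcirc : Continuous fun q : X × ℝ => F q.1 (circleMap c r q.2) :=
    hF.comp_continuous (f := fun q : X × ℝ => (q.1, circleMap c r q.2)) (by fun_prop)
      fun q => ⟨mem_univ _, circleMap_mem_sphere c hr q.2⟩
  simp only [deriv_circleMap]
  exact (((continuous_circleMap 0 r).comp continuous_snd).mul continuous_const).smul hcirc

theorem continuous_circleIntegral {F : X → ℂ → E} {c : ℂ} {r : ℝ} (hr : 0 ≤ r)
    (hF : ContinuousOn (uncurry F) (univ ×ˢ Metric.sphere c r)) :
    Continuous fun x => ∮ z in C(c, r), F x z :=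
  intervalIntegral.continuous_parametric_intervalIntegral_of_continuous' (μ := volume)
    (continuous_circleMap_smul hr hF) 0 (2 * Real.pi)

theorem hasDerivAt_circleIntegral {F F' : ℝ → ℂ → E} {c : ℂ} {r : ℝ} (hr : 0 ≤ r)
    (hF : ContinuousOn (uncurry F) (univ ×ˢ Metric.sphere c r))
    (hF' : ContinuousOn (uncurry F') (univ ×ˢ Metric.sphere c r))
    (h : ∀ x, ∀ z ∈ Metric.sphere c r, HasDerivAt (fun x' => F x' z) (F' x z) x) (x : ℝ) :
    HasDerivAt (fun x' => ∮ z in C(c, r), F x' z) (∮ z in C(c, r), F' x z) x :=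
  hasDerivAt_intervalIntegral_of_continuous (continuous_circleMap_smul hr hF)
    (continuous_circleMap_smul hr hF')
    (fun x θ => (h x _ (circleMap_mem_sphere c hr θ)).fun_const_smul _) _ _ x

end ParametricIntegrals

/-! ### Superpositions of exponentials along a circle -/

/-- The superposition `(2πi)⁻¹ ∮ exp (x a(z) + y b(z)) η(z) dz` of the plane waves with frequencies
`(a(z), b(z))`, `|z| = r`, or rather its real part, since the objects sought are real. -/
def contourKernel (r : ℝ) (a b η : ℂ → ℂ) (x y : ℝ) : ℝ :=
  ((2 * Real.pi * Complex.I)⁻¹ * ∮ z in C(0, r), Complex.exp (x * a z + y * b z) * η z).re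

section ContourKernel

variable {r : ℝ} {a b η η' : ℂ → ℂ}

theorem contourKernel_swap (x y : ℝ) :
    contourKernel r a b η x y = contourKernel r b a η y x := by
  simp only [contourKernel, add_comm]

theorem contourKernel_congr (hr : 0 ≤ r) (h : EqOn η η' (Metric.sphere 0 r)) :
    contourKernel r a b η = contourKernel r a b η' :=
  funext₂ fun x y => by
    rw [contourKernel, contourKernel, circleIntegral.integral_congr hr fun z hz => by rw [h hz]]

theorem contourKernel_const_mul (c x y : ℝ) :
    contourKernel r a b (fun z => c * η z) x y = c * contourKernel r a b η x y := by
  simp only [contourKernel, mul_left_comm _ (c : ℂ), circleIntegral.integral_const_mul,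
    Complex.re_ofReal_mul]

theorem continuousOn_exp_mul (ha : ContinuousOn a (Metric.sphere 0 r))
    (hb : ContinuousOn b (Metric.sphere 0 r)) (hη : ContinuousOn η (Metric.sphere 0 r)) :
    ContinuousOn (uncurry fun (q : ℝ × ℝ) z => Complex.exp (q.1 * a z + q.2 * b z) * η z)
      (univ ×ˢ Metric.sphere 0 r) := by
  have hsnd : MapsTo Prod.snd ((univ : Set (ℝ × ℝ)) ×ˢ Metric.sphere (0 : ℂ) r)
      (Metric.sphere 0 r) := fun q hq => hq.2
  simp only [uncurry_def]
  fun_prop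

theorem contourKernel_add (hr : 0 ≤ r) (ha : ContinuousOn a (Metric.sphere 0 r))
    (hb : ContinuousOn b (Metric.sphere 0 r)) (hη : ContinuousOn η (Metric.sphere 0 r))
    (hη' : ContinuousOn η' (Metric.sphere 0 r)) (x y : ℝ) :
    contourKernel r a b (fun z => η z + η' z) x y =
      contourKernel r a b η x y + contourKernel r a b η' x y := by
  simp only [contourKernel, mul_add]
  rw [circleIntegral.integral_add, mul_add, Complex.add_re] <;>
    exact ContinuousOn.circleIntegrable hr (by fun_prop)

theorem hasDerivAt_contourKernel_fst (hr : 0 ≤ r) (ha : ContinuousOn a (Metric.sphere 0 r))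
    (hb : ContinuousOn b (Metric.sphere 0 r)) (hη : ContinuousOn η (Metric.sphere 0 r))
    (x y : ℝ) :
    HasDerivAt (fun x' => contourKernel r a b η x' y)
      (contourKernel r a b (a * η) x y) x := by
  have restrict {f : ℂ → ℂ} (hf : ContinuousOn f (Metric.sphere 0 r)) : ContinuousOn
      (uncurry fun (x' : ℝ) z => Complex.exp (x' * a z + y * b z) * f z)
      (univ ×ˢ Metric.sphere 0 r) :=
    (continuousOn_exp_mul ha hb hf).comp (f := fun q : ℝ × ℂ => ((q.1, y), q.2)) (by fun_prop)
      fun q hq => ⟨mem_univ _, hq.2⟩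
  have hder : ∀ x' : ℝ, ∀ z ∈ Metric.sphere (0 : ℂ) r, HasDerivAt
      (fun x' : ℝ => Complex.exp (x' * a z + y * b z) * η z)
      (Complex.exp (x' * a z + y * b z) * (a * η) z) x' := fun x' z _ => by
    have hexp : HasDerivAt (fun x' : ℝ => (x' : ℂ) * a z + y * b z) (a z) x' := by
      simpa using ((hasDerivAt_id x').ofReal_comp.mul_const (a z)).add_const (y * b z)
    simpa only [mul_assoc, Pi.mul_apply] using hexp.cexp.mul_const (η z)
  exact Complex.reCLM.hasFDerivAt.comp_hasDerivAt x
    ((hasDerivAt_circleIntegral hr (restrict hη) (restrict (ha.mul hη)) hder x).const_mul _)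

theorem hasDerivAt_contourKernel_snd (hr : 0 ≤ r) (ha : ContinuousOn a (Metric.sphere 0 r))
    (hb : ContinuousOn b (Metric.sphere 0 r)) (hη : ContinuousOn η (Metric.sphere 0 r))
    (x y : ℝ) :
    HasDerivAt (fun y' => contourKernel r a b η x y')
      (contourKernel r a b (b * η) x y) y := by
  simp only [contourKernel_swap x]
  exact hasDerivAt_contourKernel_fst hr hb ha hη y x

theorem pdx_contourKernel (hr : 0 ≤ r) (ha : ContinuousOn a (Metric.sphere 0 r))
    (hb : ContinuousOn b (Metric.sphere 0 r)) (hη : ContinuousOn η (Metric.sphere 0 r)) :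
    pdx (contourKernel r a b η) = contourKernel r a b (a * η) :=
  funext₂ fun x y => (hasDerivAt_contourKernel_fst hr ha hb hη x y).deriv

theorem pdy_contourKernel (hr : 0 ≤ r) (ha : ContinuousOn a (Metric.sphere 0 r))
    (hb : ContinuousOn b (Metric.sphere 0 r)) (hη : ContinuousOn η (Metric.sphere 0 r)) :
    pdy (contourKernel r a b η) = contourKernel r a b (b * η) :=
  funext₂ fun x y => (hasDerivAt_contourKernel_snd hr ha hb hη x y).deriv

theorem contDiff_contourKernel (hr : 0 ≤ r) (ha : ContinuousOn a (Metric.sphere 0 r))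
    (hb : ContinuousOn b (Metric.sphere 0 r)) (hη : ContinuousOn η (Metric.sphere 0 r))
    (n : ℕ) : ContDiff ℝ n (uncurry (contourKernel r a b η)) := by
  induction n generalizing η with
  | zero =>
    exact contDiff_zero.2 (Complex.continuous_re.comp
      (continuous_const.mul (continuous_circleIntegral hr (continuousOn_exp_mul ha hb hη))))
  | succ n ih =>
    exact contDiff_succ_of_partials (hasDerivAt_contourKernel_fst hr ha hb hη)
      (hasDerivAt_contourKernel_snd hr ha hb hη) (ih (ha.mul hη)) (ih (hb.mul hη))

theorem contourKernel_kernelEquation (hr : 0 ≤ r) (ha : ContinuousOn a (Metric.sphere 0 r))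
    (hb : ContinuousOn b (Metric.sphere 0 r)) (hη : ContinuousOn η (Metric.sphere 0 r)) {lam : ℝ}
    (hab : ∀ z ∈ Metric.sphere (0 : ℂ) r, a z ^ 3 + b z ^ 3 + a z + b z = lam) (x y : ℝ) :
    pdx (pdx (pdx (contourKernel r a b η))) x y + pdy (pdy (pdy (contourKernel r a b η))) x y +
      pdx (contourKernel r a b η) x y + pdy (contourKernel r a b η) x y =
      lam * contourKernel r a b η x y := by
  rw [pdx_contourKernel hr ha hb hη, pdx_contourKernel hr ha hb (by fun_prop),
    pdx_contourKernel hr ha hb (by fun_prop), pdy_contourKernel hr ha hb hη,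
    pdy_contourKernel hr ha hb (by fun_prop), pdy_contourKernel hr ha hb (by fun_prop),
    ← contourKernel_add hr ha hb (by fun_prop) (by fun_prop),
    ← contourKernel_add hr ha hb (by fun_prop) (by fun_prop),
    ← contourKernel_add hr ha hb (by fun_prop) (by fun_prop), ← contourKernel_const_mul]
  refine congrFun₂ (contourKernel_congr hr fun z hz => ?_) x y
  simp only [Pi.mul_apply]
  linear_combination η z * hab z hz

end ContourKernel

theorem contourKernel_rotated {r : ℝ} {a b η : ℂ → ℂ} :
    rotated (contourKernel r a b η) =
      contourKernel r (fun z => (a z + b z) / 2) (fun z => (b z - a z) / 2) η := by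
  funext s t
  simp only [rotated, contourKernel]
  congr! 6 with z
  push_cast
  ring

theorem contourKernel_eq_of_hasDerivAt {r : ℝ} (hr : 0 < r) {a b η A f : ℂ → ℂ}
    (ha : ContinuousOn a (Metric.sphere 0 r)) (hb : ContinuousOn b (Metric.sphere 0 r))
    (hη : ContinuousOn η (Metric.sphere 0 r)) (hA : DifferentiableOn ℂ A (Metric.closedBall 0 r))
    {x y : ℝ}
    (hf : ∀ z ∈ Metric.sphere (0 : ℂ) r,
      HasDerivAt f (Complex.exp (x * a z + y * b z) * η z - z⁻¹ * A z) z) :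
    contourKernel r a b η x y = (A 0).re := by
  have hne : ∀ z ∈ Metric.sphere (0 : ℂ) r, z ≠ 0 := fun z hz => Metric.ne_of_mem_sphere hz hr.ne'
  have hexp : CircleIntegrable (fun z => Complex.exp (x * a z + y * b z) * η z) 0 r :=
    ContinuousOn.circleIntegrable hr.le (by fun_prop)
  have hpole : CircleIntegrable (fun z => z⁻¹ * A z) 0 r :=
    ((continuousOn_id.inv₀ hne).mul
      (hA.continuousOn.mono Metric.sphere_subset_closedBall)).circleIntegrable hr.le
  have hexact := circleIntegral.integral_eq_zero_of_hasDerivWithinAt hr.le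
    fun z hz => (hf z hz).hasDerivWithinAt
  rw [circleIntegral.integral_sub hexp hpole, sub_eq_zero] at hexact
  have hcauchy := hA.circleIntegral_sub_inv_smul (Metric.mem_ball_self hr)
  simp only [sub_zero, smul_eq_mul] at hcauchy
  rw [contourKernel, hexact, hcauchy, inv_mul_cancel_left₀ Complex.two_pi_I_ne_zero]

/-! ### The characteristic curve -/

theorem exists_analyticAt_pow_eq {h : ℂ → ℂ} {z₀ : ℂ} {n : ℕ} (hn : n ≠ 0)
    (hh : AnalyticAt ℂ h z₀) (h₀ : h z₀ ≠ 0) :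
    ∃ q : ℂ → ℂ, AnalyticAt ℂ q z₀ ∧ ∀ z, q z ^ n = h z := by
  obtain ⟨c, hc⟩ := IsAlgClosed.exists_pow_nat_eq (h z₀) hn.bot_lt
  refine ⟨fun z => c * (h z / h z₀) ^ (n : ℂ)⁻¹, ?_, fun z => ?_⟩
  · exact analyticAt_const.mul ((hh.div analyticAt_const h₀).cpow analyticAt_const
      (by simp [div_self h₀]))
  · rw [mul_pow, hc, Complex.cpow_nat_inv_pow _ hn, mul_div_cancel₀ _ h₀]

theorem exists_analyticAt_sq_eq (lam : ℝ) : ∃ q : ℂ → ℂ, AnalyticAt ℂ q 0 ∧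
    ∀ z, q z ^ 2 = lam / 6 - z ^ 2 / 3 - z ^ 6 / 3 := by
  obtain rfl | hlam := eq_or_ne lam 0
  · obtain ⟨q, hq, hsq⟩ := exists_analyticAt_pow_eq (z₀ := 0) (h := fun z => -1 / 3 - z ^ 4 / 3)
      two_ne_zero (by fun_prop) (by norm_num)
    refine ⟨fun z => z * q z, analyticAt_id.mul hq, fun z => ?_⟩
    simp only [mul_pow, hsq, Complex.ofReal_zero]
    ring
  · exact exists_analyticAt_pow_eq two_ne_zero (by fun_prop) (by simpa using hlam)

/-- A contour for `λ`: a circle `|z| = r` in the domain of an analytic square root `q` of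
`λ/6 - z²/3 - z⁶/3`. For `ρ = q / z` the frequencies `(z² - ρ, z² + ρ)` then run along the
characteristic curve `a³ + b³ + a + b = λ`. -/
structure CharacteristicContour (lam : ℝ) where
  /-- The radius of the circle. -/
  r : ℝ
  /-- The square root. -/
  q : ℂ → ℂ
  r_pos : 0 < r
  analytic : AnalyticOnNhd ℂ q (Metric.closedBall 0 r)
  sq : ∀ z, q z ^ 2 = lam / 6 - z ^ 2 / 3 - z ^ 6 / 3

theorem nonempty_characteristicContour (lam : ℝ) : Nonempty (CharacteristicContour lam) := by
  obtain ⟨q, hq, hsq⟩ := exists_analyticAt_sq_eq lam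
  obtain ⟨R, hR, hball⟩ := hq.exists_ball_analyticOnNhd
  exact ⟨⟨R / 2, q, by positivity, hball.mono (Metric.closedBall_subset_ball (by linarith)), hsq⟩⟩

namespace CharacteristicContour

variable {lam : ℝ} (S : CharacteristicContour lam)

/-- The meromorphic branch `ρ = q / z` with `z² ρ² = λ/6 - z²/3 - z⁶/3`. -/
def rho (z : ℂ) : ℂ := S.q z / z

variable {S}

theorem ne_zero {z : ℂ} (hz : z ∈ Metric.sphere (0 : ℂ) S.r) : z ≠ 0 :=
  Metric.ne_of_mem_sphere hz S.r_pos.ne'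

theorem q_eq {z : ℂ} (hz : z ∈ Metric.sphere (0 : ℂ) S.r) : S.q z = S.rho z * z :=
  (div_mul_cancel₀ _ (ne_zero hz)).symm

theorem analyticOnNhd_rho : AnalyticOnNhd ℂ S.rho (Metric.sphere 0 S.r) := fun z hz =>
  (S.analytic z (Metric.sphere_subset_closedBall hz)).div analyticAt_id (ne_zero hz)

theorem hasDerivAt_rho {z : ℂ} (hz : z ∈ Metric.sphere (0 : ℂ) S.r) :
    HasDerivAt S.rho (deriv S.rho z) z :=
  (analyticOnNhd_rho z hz).differentiableAt.hasDerivAt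

theorem characteristic_eq {z : ℂ} (hz : z ∈ Metric.sphere (0 : ℂ) S.r) :
    (z ^ 2 - S.rho z) ^ 3 + (z ^ 2 + S.rho z) ^ 3 + (z ^ 2 - S.rho z) + (z ^ 2 + S.rho z) =
      lam := by
  have hsq := S.sq z
  rw [q_eq hz] at hsq
  linear_combination 6 * hsq

variable (S)

theorem continuousOn_rho : ContinuousOn S.rho (Metric.sphere 0 S.r) :=
  analyticOnNhd_rho.continuousOn

theorem continuousOn_deriv_rho : ContinuousOn (deriv S.rho) (Metric.sphere 0 S.r) :=
  analyticOnNhd_rho.deriv.continuousOn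

/-- The contour representation of the observer kernel. The density is chosen so that on each part
of the boundary the integrand is a derivative up to a simple pole at `0`. -/
def observer : ℝ → ℝ → ℝ :=
  contourKernel S.r (fun z => z ^ 2 - S.rho z) (fun z => z ^ 2 + S.rho z)
    (fun z => deriv S.rho z + 2 * z)

theorem contDiff_observer (n : ℕ) : ContDiff ℝ n (uncurry S.observer) := by
  have hρ := S.continuousOn_rho
  have hρ' := S.continuousOn_deriv_rho
  exact contDiff_contourKernel S.r_pos.le (by fun_prop) (by fun_prop) (by fun_prop) n

theorem observer_kernelEquation (x y : ℝ) :
    pdx (pdx (pdx S.observer)) x y + pdy (pdy (pdy S.observer)) x y + pdx S.observer x y +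
      pdy S.observer x y = lam * S.observer x y := by
  have hρ := S.continuousOn_rho
  have hρ' := S.continuousOn_deriv_rho
  exact contourKernel_kernelEquation S.r_pos.le (by fun_prop) (by fun_prop) (by fun_prop)
    (fun z hz => characteristic_eq hz) x y

theorem observer_diagonal (x : ℝ) : S.observer x x = 0 := by
  have hρ := S.continuousOn_rho
  have hρ' := S.continuousOn_deriv_rho
  have hq := S.analytic.differentiableOn
  refine (contourKernel_eq_of_hasDerivAt S.r_pos (by fun_prop) (by fun_prop) (by fun_prop)
    (A := fun z => -(4 * x * z * Complex.exp (2 * x * z ^ 2) * (S.q z + z ^ 3)))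
    (f := fun z => Complex.exp (2 * x * z ^ 2) * (S.rho z + z ^ 2)) (by fun_prop)
    fun z hz => ?_).trans (by simp)
  have he : (x * (z ^ 2 - S.rho z) + x * (z ^ 2 + S.rho z) : ℂ) = 2 * x * z ^ 2 := by ring
  refine (((hasDerivAt_pow 2 z).const_mul (2 * x : ℂ)).cexp.fun_mul
    ((hasDerivAt_rho hz).fun_add (hasDerivAt_pow 2 z))).congr_deriv ?_
  rw [he, q_eq hz]
  simp only [Nat.cast_ofNat, Nat.add_one_sub_one, pow_one]
  field_simp
  ring

theorem pdx_observer_diagonal (x : ℝ) : pdx S.observer x x = lam / 3 * x := by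
  have hρ := S.continuousOn_rho
  have hρ' := S.continuousOn_deriv_rho
  have hq := S.analytic.differentiableOn
  rw [observer, pdx_contourKernel S.r_pos.le (by fun_prop) (by fun_prop) (by fun_prop)]
  refine (contourKernel_eq_of_hasDerivAt S.r_pos (by fun_prop) (by fun_prop) (by fun_prop)
    (A := fun z => Complex.exp (2 * x * z ^ 2) * (2 * x * S.q z ^ 2 - 4 * x * z ^ 3 * S.q z +
      z * (2 * z ^ 3 - 4 * S.q z)))
    (f := fun z => Complex.exp (2 * x * z ^ 2) * (z ^ 2 * S.rho z - S.rho z ^ 2 / 2)) (by fun_prop)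
    fun z hz => ?_).trans ?_
  · have he : (x * (z ^ 2 - S.rho z) + x * (z ^ 2 + S.rho z) : ℂ) = 2 * x * z ^ 2 := by ring
    refine (((hasDerivAt_pow 2 z).const_mul (2 * x : ℂ)).cexp.fun_mul
      (((hasDerivAt_pow 2 z).fun_mul (hasDerivAt_rho hz)).fun_sub
      (((hasDerivAt_rho hz).fun_pow 2).div_const 2))).congr_deriv ?_
    rw [he, q_eq hz]
    simp only [Nat.cast_ofNat, Nat.add_one_sub_one, pow_one, Pi.mul_apply]
    field_simp
    ring
  · have hval : S.q 0 ^ 2 = (lam / 6 : ℝ) := by simp [S.sq]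
    have harith : 2 * x * (lam / 6) = lam / 3 * x := by ring
    simpa [hval, ← Complex.ofReal_ofNat, ← Complex.ofReal_mul] using harith

theorem observer_left_zero (y : ℝ) : S.observer 0 y = 0 := by
  have hρ := S.continuousOn_rho
  have hρ' := S.continuousOn_deriv_rho
  obtain rfl | hy := eq_or_ne y 0
  · exact S.observer_diagonal 0
  refine (contourKernel_eq_of_hasDerivAt S.r_pos (by fun_prop) (by fun_prop) (by fun_prop)
    (A := fun _ => 0)
    (f := fun z => Complex.exp (y * (z ^ 2 + S.rho z)) / y) (by fun_prop) fun z hz => ?_).trans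
    (by simp)
  have hy' : (y : ℂ) ≠ 0 := by exact_mod_cast hy
  refine ((((hasDerivAt_pow 2 z).fun_add (hasDerivAt_rho hz)).const_mul
    (y : ℂ)).cexp.div_const _).congr_deriv ?_
  simp only [Nat.cast_ofNat, Nat.add_one_sub_one, pow_one, Complex.ofReal_zero, zero_mul, zero_add]
  field_simp
  ring

theorem isObserverKernel_observer : IsObserverKernel lam S.observer :=
  ⟨S.contDiff_observer 3, fun x y _ => S.observer_kernelEquation x y,
    fun x _ => S.observer_diagonal x, fun x _ => S.pdx_observer_diagonal x,
    fun y _ => S.observer_left_zero y⟩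

/-- The kernel of the Duhamel-type correction `∫₀ᵗ E(s - 1, t - τ) g(τ) dτ` in the characteristic
variables; as for `observer`, the density makes its boundary values computable. -/
def duhamelKernel : ℝ → ℝ → ℝ :=
  contourKernel S.r (fun z => z ^ 2) S.rho (fun z => -deriv S.rho z)

theorem duhamelKernel_eq_rotated : S.duhamelKernel = rotated
    (contourKernel S.r (fun z => z ^ 2 - S.rho z) (fun z => z ^ 2 + S.rho z)
      (fun z => -deriv S.rho z)) := by
  rw [contourKernel_rotated, duhamelKernel]
  congr <;> (funext z; ring)

theorem contDiff_duhamelKernel (n : ℕ) : ContDiff ℝ n (uncurry S.duhamelKernel) :=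
  contDiff_contourKernel S.r_pos.le (by fun_prop) S.continuousOn_rho S.continuousOn_deriv_rho.neg n

theorem duhamelKernel_kernelEquation (s t : ℝ) :
    2 * pdx (pdx (pdx S.duhamelKernel)) s t + 6 * pdx (pdy (pdy S.duhamelKernel)) s t +
      2 * pdx S.duhamelKernel s t = lam * S.duhamelKernel s t := by
  have hρ := S.continuousOn_rho
  have hρ' := S.continuousOn_deriv_rho
  rw [duhamelKernel_eq_rotated]
  exact kernelEquation_rotated
    (contDiff_contourKernel S.r_pos.le (by fun_prop) (by fun_prop) (by fun_prop) 3)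
    (contourKernel_kernelEquation S.r_pos.le (by fun_prop) (by fun_prop) (by fun_prop)
      (fun z hz => characteristic_eq hz) _ _)

theorem duhamelKernel_right_zero (s : ℝ) : S.duhamelKernel s 0 = 0 := by
  have hq := S.analytic.differentiableOn
  refine (contourKernel_eq_of_hasDerivAt S.r_pos (by fun_prop) S.continuousOn_rho
    S.continuousOn_deriv_rho.neg (A := fun z => 2 * s * z * Complex.exp (s * z ^ 2) * S.q z)
    (f := fun z => -(Complex.exp (s * z ^ 2) * S.rho z)) (by fun_prop) fun z hz => ?_).trans
    (by simp)
  refine ((((hasDerivAt_pow 2 z).const_mul (s : ℂ)).cexp.fun_mul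
    (hasDerivAt_rho hz)).neg).congr_deriv ?_
  rw [q_eq hz]
  simp only [Nat.cast_ofNat, Nat.add_one_sub_one, pow_one, Complex.ofReal_zero, zero_mul, add_zero,
    Pi.neg_apply]
  field_simp
  ring

theorem pdy_duhamelKernel_right_zero (s : ℝ) : pdy S.duhamelKernel s 0 = lam / 6 * s := by
  have hρ := S.continuousOn_rho
  have hρ' := S.continuousOn_deriv_rho
  have hq := S.analytic.differentiableOn
  rw [duhamelKernel, pdy_contourKernel S.r_pos.le (by fun_prop) hρ (by fun_prop)]
  refine (contourKernel_eq_of_hasDerivAt S.r_pos (by fun_prop) hρ (by fun_prop)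
    (A := fun z => s * Complex.exp (s * z ^ 2) * S.q z ^ 2)
    (f := fun z => -(Complex.exp (s * z ^ 2) * (S.rho z ^ 2 / 2))) (by fun_prop)
    fun z hz => ?_).trans ?_
  · refine ((((hasDerivAt_pow 2 z).const_mul (s : ℂ)).cexp.fun_mul
      (((hasDerivAt_rho hz).fun_pow 2).div_const 2)).neg).congr_deriv ?_
    rw [q_eq hz]
    simp only [Nat.cast_ofNat, Nat.add_one_sub_one, pow_one, Complex.ofReal_zero, zero_mul,
      add_zero, Pi.mul_apply]
    field_simp
    ring
  · have hval : S.q 0 ^ 2 = (lam / 6 : ℝ) := by simp [S.sq]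
    simpa [hval] using mul_comm s (lam / 6)

theorem duhamelKernel_left_zero (t : ℝ) : S.duhamelKernel 0 t = 0 := by
  obtain rfl | ht := eq_or_ne t 0
  · exact S.duhamelKernel_right_zero 0
  refine (contourKernel_eq_of_hasDerivAt S.r_pos (by fun_prop) S.continuousOn_rho
    S.continuousOn_deriv_rho.neg (A := fun _ => 0)
    (f := fun z => -(Complex.exp (t * S.rho z) / t)) (by fun_prop) fun z hz => ?_).trans
    (by simp)
  have ht' : (t : ℂ) ≠ 0 := by exact_mod_cast ht
  refine (((((hasDerivAt_rho hz).const_mul (t : ℂ)).cexp).div_const _).neg).congr_deriv ?_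
  simp only [mul_zero, sub_zero, Complex.ofReal_zero, zero_mul, zero_add,
    Pi.neg_apply]
  field_simp

end CharacteristicContour

/-! ### Volterra integrals -/

theorem hasDerivAt_intervalIntegral_right {F F' : ℝ → ℝ → ℝ} (hF : Continuous (uncurry F))
    (hF' : Continuous (uncurry F')) (h : ∀ x θ, HasDerivAt (fun x' => F x' θ) (F' x θ) x)
    (a t : ℝ) :
    HasDerivAt (fun t' => ∫ θ in a..t', F t' θ) (F t t + ∫ θ in a..t, F' t θ) t := by
  have hr (r x : ℝ) : HasDerivAt (fun r => ∫ θ in a..r, F x θ) (F x r) r :=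
    (hF.comp (Continuous.prodMk_right x)).integral_hasStrictDerivAt a r |>.hasDerivAt
  have hx (r x : ℝ) : HasDerivAt (fun x => ∫ θ in a..r, F x θ) (∫ θ in a..r, F' x θ) x :=
    hasDerivAt_intervalIntegral_of_continuous hF hF' h a r x
  have hc : ContDiff ℝ ((0 : ℕ) + 1) (uncurry fun r x => ∫ θ in a..r, F x θ) :=
    contDiff_succ_of_partials hr hx (contDiff_zero.2 (hF.comp continuous_swap))
      (contDiff_zero.2 ((intervalIntegral.continuous_parametric_primitive_of_continuous
        (μ := volume) (a₀ := a) hF').comp continuous_swap))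
  have hcurve := hasDerivAt_comp_curve (hc.differentiable (by simp)) (hasDerivAt_id t)
    (hasDerivAt_id t)
  rw [one_mul, one_mul] at hcurve
  exact hcurve.congr_deriv (congrArg₂ (· + ·) (hr t t).deriv (hx t t).deriv)

/-- The Volterra integral `∫₀ᵗ K(s, t - τ) g(τ) dτ`, a convolution in the second variable. -/
def volterra (K : ℝ → ℝ → ℝ) (g : ℝ → ℝ) (s t : ℝ) : ℝ := ∫ τ in (0 : ℝ)..t, K s (t - τ) * g τ

section Volterra

variable {K : ℝ → ℝ → ℝ} {g : ℝ → ℝ}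

theorem volterra_right_zero (s : ℝ) : volterra K g s 0 = 0 :=
  intervalIntegral.integral_same

theorem volterra_add {L : ℝ → ℝ → ℝ} (hK : Continuous (uncurry K)) (hL : Continuous (uncurry L))
    (hg : Continuous g) (s t : ℝ) :
    volterra (K + L) g s t = volterra K g s t + volterra L g s t := by
  have hint {f : ℝ → ℝ → ℝ} (hf : Continuous (uncurry f)) :
      IntervalIntegrable (fun τ => f s (t - τ) * g τ) volume 0 t :=
    ((hf.comp (f := fun τ : ℝ => (s, t - τ)) (by fun_prop)).mul hg).intervalIntegrable _ _
  simp only [volterra, Pi.add_apply, add_mul, intervalIntegral.integral_add (hint hK) (hint hL)]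

theorem volterra_smul (c s t : ℝ) : volterra (c • K) g s t = c * volterra K g s t := by
  simp only [volterra, Pi.smul_apply, smul_eq_mul, mul_assoc, intervalIntegral.integral_const_mul]

theorem continuous_volterra (hK : Continuous (uncurry K)) (hg : Continuous g) :
    Continuous (uncurry (volterra K g)) := by
  have hintegrand : Continuous (uncurry fun (q : ℝ × ℝ) τ => K q.1 (q.2 - τ) * g τ) :=
    (hK.comp (f := fun p : (ℝ × ℝ) × ℝ => (p.1.1, p.1.2 - p.2)) (by fun_prop)).mul
      (hg.comp continuous_snd)
  exact intervalIntegral.continuous_parametric_intervalIntegral_of_continuous (μ := volume)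
    (a₀ := 0) hintegrand continuous_snd

theorem hasDerivAt_volterra_fst (hK : ContDiff ℝ 1 (uncurry K)) (hg : Continuous g) (s t : ℝ) :
    HasDerivAt (fun s => volterra K g s t) (volterra (pdx K) g s t) s := by
  have hKx : ContDiff ℝ 0 (uncurry (pdx K)) := contDiff_pdx hK (by norm_num)
  have integrand {K : ℝ → ℝ → ℝ} (hK : Continuous (uncurry K)) :
      Continuous (uncurry fun s τ => K s (t - τ) * g τ) :=
    (hK.comp (f := fun p : ℝ × ℝ => (p.1, t - p.2)) (by fun_prop)).mul (hg.comp continuous_snd)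
  exact hasDerivAt_intervalIntegral_of_continuous (integrand hK.continuous)
    (integrand hKx.continuous)
    (fun s τ => (hasDerivAt_pdx (hK.differentiable one_ne_zero) s (t - τ)).mul_const (g τ)) 0 t s

theorem hasDerivAt_volterra_snd (hK : ContDiff ℝ 1 (uncurry K)) (hg : Continuous g) (s t : ℝ) :
    HasDerivAt (volterra K g s) (K s 0 * g t + volterra (pdy K) g s t) t := by
  have hKy : ContDiff ℝ 0 (uncurry (pdy K)) := contDiff_pdy hK (by norm_num)
  have integrand {K : ℝ → ℝ → ℝ} (hK : Continuous (uncurry K)) :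
      Continuous (uncurry fun t τ => K s (t - τ) * g τ) :=
    (hK.comp (f := fun p : ℝ × ℝ => (s, p.1 - p.2)) (by fun_prop)).mul (hg.comp continuous_snd)
  have h := hasDerivAt_intervalIntegral_right (integrand hK.continuous) (integrand hKy.continuous)
    (fun t τ => ((hasDerivAt_pdy (hK.differentiable one_ne_zero) s (t - τ)).comp_sub_const t
      τ).mul_const (g τ)) 0 t
  rwa [sub_self] at h

theorem pdx_volterra (hK : ContDiff ℝ 1 (uncurry K)) (hg : Continuous g) :
    pdx (volterra K g) = volterra (pdx K) g :=
  funext₂ fun s t => (hasDerivAt_volterra_fst hK hg s t).deriv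

theorem pdy_volterra (hK : ContDiff ℝ 1 (uncurry K)) (hg : Continuous g) :
    pdy (volterra K g) = fun s t => K s 0 * g t + volterra (pdy K) g s t :=
  funext₂ fun s t => (hasDerivAt_volterra_snd hK hg s t).deriv

theorem contDiff_volterra {n : ℕ} (hK : ContDiff ℝ n (uncurry K)) (hg : ContDiff ℝ n g) :
    ContDiff ℝ n (uncurry (volterra K g)) := by
  induction n generalizing K with
  | zero => exact contDiff_zero.2 (continuous_volterra hK.continuous hg.continuous)
  | succ n ih =>
    have hK' : ContDiff ℝ (n + 1) (uncurry K) := hK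
    have hg' : ContDiff ℝ n g := hg.of_le (by norm_cast; omega)
    have hK1 : ContDiff ℝ 1 (uncurry K) := hK.of_le (by norm_cast; omega)
    have htrace : ContDiff ℝ n (fun q : ℝ × ℝ => K q.1 0 * g q.2) :=
      ((hK.of_le (by norm_cast; omega)).comp (f := fun q : ℝ × ℝ => (q.1, (0 : ℝ)))
        (by fun_prop)).mul (hg'.comp contDiff_snd)
    exact contDiff_succ_of_partials (hasDerivAt_volterra_fst hK1 hg.continuous)
      (hasDerivAt_volterra_snd hK1 hg.continuous) (ih (contDiff_pdx hK' le_rfl) hg')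
      (htrace.add (ih (contDiff_pdy hK' le_rfl) hg'))

theorem volterra_kernelEquation {lam a : ℝ} (hK : ContDiff ℝ 3 (uncurry K)) (hg : Continuous g)
    (heq : ∀ s t, 2 * pdx (pdx (pdx K)) s t + 6 * pdx (pdy (pdy K)) s t + 2 * pdx K s t =
      lam * K s t)
    (h0 : ∀ s, K s 0 = 0) (h1 : ∀ s, pdy K s 0 = lam / 6 * (s - a)) (s t : ℝ) :
    2 * pdx (pdx (pdx (volterra K g))) s t + 6 * pdx (pdy (pdy (volterra K g))) s t +
      2 * pdx (volterra K g) s t = lam * (volterra K g s t + g t) := by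
  have hK1 : ContDiff ℝ 1 (uncurry K) := hK.of_le (by norm_num)
  have hKx : ContDiff ℝ 2 (uncurry (pdx K)) := contDiff_pdx hK (by norm_num)
  have hKy : ContDiff ℝ 2 (uncurry (pdy K)) := contDiff_pdy hK (by norm_num)
  have hVy : pdy (volterra K g) = volterra (pdy K) g := by
    simp only [pdy_volterra hK1 hg, h0, zero_mul, zero_add]
  have hVyy : pdy (pdy (volterra K g)) =
      fun s t => lam / 6 * (s - a) * g t + volterra (pdy (pdy K)) g s t := by
    simp only [hVy, pdy_volterra (hKy.of_le one_le_two) hg, h1]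
  have hVxyy : pdx (pdy (pdy (volterra K g))) s t =
      lam / 6 * g t + volterra (pdx (pdy (pdy K))) g s t := by
    rw [hVyy]
    have hlin : HasDerivAt (fun s => lam / 6 * (s - a)) (lam / 6) s := by
      simpa using ((hasDerivAt_id s).sub_const a).const_mul (lam / 6)
    exact ((hlin.mul_const (g t)).add
      (hasDerivAt_volterra_fst (contDiff_pdy hKy (by norm_num)) hg s t)).deriv
  have hVxxx : pdx (pdx (pdx (volterra K g))) = volterra (pdx (pdx (pdx K))) g := by
    rw [pdx_volterra hK1 hg, pdx_volterra (hKx.of_le one_le_two) hg,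
      pdx_volterra (contDiff_pdx hKx (by norm_num)) hg]
  have hKxx : ContDiff ℝ 1 (uncurry (pdx (pdx K))) := contDiff_pdx hKx (by norm_num)
  have hKyy : ContDiff ℝ 1 (uncurry (pdy (pdy K))) := contDiff_pdy hKy (by norm_num)
  have cxxx := (contDiff_pdx (m := 0) hKxx (by norm_num)).continuous
  have cxyy := (contDiff_pdx (m := 0) hKyy (by norm_num)).continuous
  have scale {f : ℝ → ℝ → ℝ} (c : ℝ) (hf : Continuous (uncurry f)) : Continuous (uncurry (c • f)) :=
    hf.const_smul c
  have csum : Continuous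
      (uncurry ((2 : ℝ) • pdx (pdx (pdx K)) + (6 : ℝ) • pdx (pdy (pdy K)))) :=
    (scale 2 cxxx).add (scale 6 cxyy)
  have hlinear := congrArg (volterra · g s t) (funext₂ heq :
    (2 : ℝ) • pdx (pdx (pdx K)) + (6 : ℝ) • pdx (pdy (pdy K)) + (2 : ℝ) • pdx K = lam • K)
  rw [volterra_add csum (scale 2 hKx.continuous) hg,
    volterra_add (scale 2 cxxx) (scale 6 cxyy) hg, volterra_smul, volterra_smul, volterra_smul,
    volterra_smul] at hlinear
  rw [hVxxx, hVxyy, pdx_volterra hK1 hg]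
  linear_combination hlinear

end Volterra

theorem eq_zero_of_eq_volterra {k : ℝ → ℝ → ℝ} {g : ℝ → ℝ} {r : ℝ} (hk : Continuous (uncurry k))
    (hg : Continuous g) (h : ∀ t ∈ Ico 0 r, g t = ∫ τ in (0 : ℝ)..t, k t τ * g τ) :
    ∀ t ∈ Ico 0 r, g t = 0 := by
  intro b hb
  obtain ⟨C, hC⟩ := IsCompact.exists_bound_of_continuousOn
    (isCompact_Icc.prod isCompact_Icc) (hk.continuousOn (s := Icc 0 b ×ˢ Icc 0 b))
  have hbound : ∀ t ∈ Icc 0 b, |g t| ≤ C * ∫ τ in (0 : ℝ)..t, |g τ| := fun t ht => by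
    rw [h t ⟨ht.1, ht.2.trans_lt hb.2⟩, ← intervalIntegral.integral_const_mul]
    refine (intervalIntegral.abs_integral_le_integral_abs ht.1).trans
      (intervalIntegral.integral_mono_on ht.1 ?_ ?_ fun τ hτ => ?_)
    · exact Continuous.intervalIntegrable (by fun_prop) _ _
    · exact Continuous.intervalIntegrable (by fun_prop) _ _
    · rw [abs_mul]
      exact mul_le_mul_of_nonneg_right (hC (t, τ) ⟨ht, hτ.1, hτ.2.trans ht.2⟩) (abs_nonneg _)
  have hderiv (t : ℝ) : HasDerivAt (fun t => ∫ τ in (0 : ℝ)..t, |g τ|) |g t| t :=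
    (hg.abs.integral_hasStrictDerivAt 0 t).hasDerivAt
  have hzero := eq_zero_of_abs_deriv_le_mul_abs_self_of_eq_zero_right
    (f := fun t => ∫ τ in (0 : ℝ)..t, |g τ|) (b := b) (K := C)
    (fun t _ => (hderiv t).continuousAt.continuousWithinAt)
    (fun t _ => (hderiv t).hasDerivWithinAt) intervalIntegral.integral_same
    (fun t ht => ?_) b ⟨hb.1, le_rfl⟩
  · simpa only [hzero, mul_zero, abs_nonpos_iff] using hbound b ⟨hb.1, le_rfl⟩
  · rw [Real.norm_eq_abs, abs_abs, Real.norm_eq_abs,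
      abs_of_nonneg (intervalIntegral.integral_nonneg ht.1 fun _ _ => abs_nonneg _)]
    exact hbound t ⟨ht.1, ht.2.le⟩

/-! ### A Carleman inequality for `∂ₜ² + κ ∂ₛ²` -/

theorem integral_divergence_eq_zero {f g : ℝ → ℝ → ℝ} {a b : ℝ × ℝ}
    (hf : ContDiff ℝ 1 (uncurry f)) (hg : ContDiff ℝ 1 (uncurry g)) (hab : a ≤ b)
    (hf0 : ∀ q ∈ Icc a b \ Ioo a.1 b.1 ×ˢ Ioo a.2 b.2, f q.1 q.2 = 0)
    (hg0 : ∀ q ∈ Icc a b \ Ioo a.1 b.1 ×ˢ Ioo a.2 b.2, g q.1 q.2 = 0) :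
    ∫ q in Icc a b, (pdx f q.1 q.2 + pdy g q.1 q.2) = 0 := by
  have hcont : Continuous fun q : ℝ × ℝ =>
      fderiv ℝ (uncurry f) q (1, 0) + fderiv ℝ (uncurry g) q (0, 1) :=
    ((hf.continuous_fderiv one_ne_zero).clm_apply continuous_const).add
      ((hg.continuous_fderiv one_ne_zero).clm_apply continuous_const)
  have hdiv := integral_divergence_prod_Icc_of_hasFDerivAt_of_le (uncurry f) (uncurry g)
    (fderiv ℝ (uncurry f)) (fderiv ℝ (uncurry g)) a b hab hf.continuous.continuousOn
    hg.continuous.continuousOn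
    (fun q _ => (hf.differentiable one_ne_zero q).hasFDerivAt)
    (fun q _ => (hg.differentiable one_ne_zero q).hasFDerivAt) hcont.integrableOn_Icc
  have hvert {s : ℝ} (hs : s ∈ Icc a.1 b.1 \ Ioo a.1 b.1) : ∫ t in a.2..b.2, f s t = 0 := by
    refine (intervalIntegral.integral_congr fun t ht => ?_).trans intervalIntegral.integral_zero
    rw [uIcc_of_le hab.2] at ht
    exact hf0 (s, t) ⟨⟨⟨hs.1.1, ht.1⟩, hs.1.2, ht.2⟩, fun h => hs.2 h.1⟩
  have hhor {t : ℝ} (ht : t ∈ Icc a.2 b.2 \ Ioo a.2 b.2) : ∫ s in a.1..b.1, g s t = 0 := by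
    refine (intervalIntegral.integral_congr fun s hs => ?_).trans intervalIntegral.integral_zero
    rw [uIcc_of_le hab.1] at hs
    exact hg0 (s, t) ⟨⟨⟨hs.1, ht.1.1⟩, hs.2, ht.1.2⟩, fun h => ht.2 h.2⟩
  simp only [uncurry, hvert ⟨left_mem_Icc.2 hab.1, left_notMem_Ioo⟩,
    hvert ⟨right_mem_Icc.2 hab.1, right_notMem_Ioo⟩, hhor ⟨left_mem_Icc.2 hab.2, left_notMem_Ioo⟩,
    hhor ⟨right_mem_Icc.2 hab.2, right_notMem_Ioo⟩, sub_zero, add_zero] at hdiv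
  have hfs (q : ℝ × ℝ) : fderiv ℝ (uncurry f) q (1, 0) = pdx f q.1 q.2 :=
    (congrFun (uncurry_pdx_eq_fderiv (hf.differentiable one_ne_zero)) q).symm
  have hgt (q : ℝ × ℝ) : fderiv ℝ (uncurry g) q (0, 1) = pdy g q.1 q.2 :=
    (congrFun (uncurry_pdy_eq_fderiv (hg.differentiable one_ne_zero)) q).symm
  simpa only [hfs, hgt] using hdiv

section Carleman

variable {κ τ : ℝ} {u v : ℝ → ℝ → ℝ}

/-- The first component of the vector field whose divergence appears in `carleman_identity`. -/
def carlemanFluxFst (κ τ : ℝ) (u v : ℝ → ℝ → ℝ) (s t : ℝ) : ℝ :=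
  4 * κ * (v s t * pdy u s t) + 4 * κ * τ * ((s - 1) * (u s t ^ 2 + κ * v s t ^ 2))

/-- The second component of the vector field whose divergence appears in `carleman_identity`. -/
def carlemanFluxSnd (κ τ : ℝ) (u v : ℝ → ℝ → ℝ) (s t : ℝ) : ℝ :=
  -(4 * κ) * (v s t * pdx u s t) + 4 * τ * ((1 - t) * (u s t ^ 2 + κ * v s t ^ 2))

theorem contDiff_carlemanFluxFst (hu : ContDiff ℝ 2 (uncurry u)) (hv : ContDiff ℝ 1 (uncurry v)) :
    ContDiff ℝ 1 (uncurry (carlemanFluxFst κ τ u v)) := by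
  have cu : ContDiff ℝ 1 fun q : ℝ × ℝ => u q.1 q.2 := hu.of_le one_le_two
  have cv : ContDiff ℝ 1 fun q : ℝ × ℝ => v q.1 q.2 := hv
  have cut : ContDiff ℝ 1 fun q : ℝ × ℝ => pdy u q.1 q.2 := contDiff_pdy hu le_rfl
  simp only [uncurry_def, carlemanFluxFst]
  fun_prop

theorem contDiff_carlemanFluxSnd (hu : ContDiff ℝ 2 (uncurry u)) (hv : ContDiff ℝ 1 (uncurry v)) :
    ContDiff ℝ 1 (uncurry (carlemanFluxSnd κ τ u v)) := by
  have cu : ContDiff ℝ 1 fun q : ℝ × ℝ => u q.1 q.2 := hu.of_le one_le_two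
  have cv : ContDiff ℝ 1 fun q : ℝ × ℝ => v q.1 q.2 := hv
  have cus : ContDiff ℝ 1 fun q : ℝ × ℝ => pdx u q.1 q.2 := contDiff_pdx hu le_rfl
  simp only [uncurry_def, carlemanFluxSnd]
  fun_prop

/- With `u = e^{τφ} a` and `v = e^{τφ} b` for `φ = (1 - t)² - (s - 1)²`, the first two squares are
those of `e^{τφ} (∂ₜa + κ ∂ₛb)` and `e^{τφ} (∂ₜb - ∂ₛa)`; the last two are obtained from them by
changing the sign of the symmetric part of this first-order system. -/
theorem carleman_identity (hu : ContDiff ℝ 2 (uncurry u)) (hv : ContDiff ℝ 1 (uncurry v))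
    (s t : ℝ) :
    pdx (carlemanFluxFst κ τ u v) s t + pdy (carlemanFluxSnd κ τ u v) s t +
        4 * τ * (1 - κ) * (u s t ^ 2 + κ * v s t ^ 2) =
      (pdy u s t + 2 * τ * (1 - t) * u s t + κ * (pdx v s t + 2 * τ * (s - 1) * v s t)) ^ 2 +
        κ * (pdy v s t + 2 * τ * (1 - t) * v s t - pdx u s t - 2 * τ * (s - 1) * u s t) ^ 2 -
        (pdy u s t - 2 * τ * (1 - t) * u s t - κ * (pdx v s t - 2 * τ * (s - 1) * v s t)) ^ 2 -
        κ * (pdy v s t - 2 * τ * (1 - t) * v s t + pdx u s t - 2 * τ * (s - 1) * u s t) ^ 2 := by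
  have hus := hasDerivAt_pdx (hu.differentiable two_ne_zero) s t
  have hut := hasDerivAt_pdy (hu.differentiable two_ne_zero) s t
  have hvs := hasDerivAt_pdx (hv.differentiable one_ne_zero) s t
  have hvt := hasDerivAt_pdy (hv.differentiable one_ne_zero) s t
  have huts := hasDerivAt_pdx (differentiable_pdy hu) s t
  have hust := hasDerivAt_pdy (differentiable_pdx hu) s t
  have hds := ((hvs.mul huts).const_mul (4 * κ)).add ((((hasDerivAt_id s).sub_const 1).mul
    ((hus.pow 2).add ((hvs.pow 2).const_mul κ))).const_mul (4 * κ * τ))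
  have hdt := ((hvt.mul hust).const_mul (-(4 * κ))).add ((((hasDerivAt_id t).const_sub 1).mul
    ((hut.pow 2).add ((hvt.pow 2).const_mul κ))).const_mul (4 * τ))
  refine (congrArg₂ (fun x y => x + y + _) hds.deriv hdt.deriv).trans ?_
  simp only [pdx_pdy_comm hu, id, Pi.add_apply, Pi.pow_apply]
  ring

theorem carleman_inequality {a b : ℝ × ℝ} (hκ : κ ∈ Icc 0 1) (hτ : 0 ≤ τ)
    (hu : ContDiff ℝ 2 (uncurry u)) (hv : ContDiff ℝ 1 (uncurry v)) (hab : a ≤ b)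
    (hu0 : ∀ q ∈ Icc a b \ Ioo a.1 b.1 ×ˢ Ioo a.2 b.2, u q.1 q.2 = 0)
    (hv0 : ∀ q ∈ Icc a b \ Ioo a.1 b.1 ×ˢ Ioo a.2 b.2, v q.1 q.2 = 0) :
    4 * τ * (1 - κ) * ∫ q in Icc a b, u q.1 q.2 ^ 2 ≤
      ∫ q in Icc a b, ((pdy u q.1 q.2 + 2 * τ * (1 - q.2) * u q.1 q.2 +
          κ * (pdx v q.1 q.2 + 2 * τ * (q.1 - 1) * v q.1 q.2)) ^ 2 +
        κ * (pdy v q.1 q.2 + 2 * τ * (1 - q.2) * v q.1 q.2 -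
          pdx u q.1 q.2 - 2 * τ * (q.1 - 1) * u q.1 q.2) ^ 2) := by
  have cu : ContDiff ℝ 1 fun q : ℝ × ℝ => u q.1 q.2 := hu.of_le one_le_two
  have cv : ContDiff ℝ 1 fun q : ℝ × ℝ => v q.1 q.2 := hv
  have cus : ContDiff ℝ 1 fun q : ℝ × ℝ => pdx u q.1 q.2 := contDiff_pdx hu le_rfl
  have cut : ContDiff ℝ 1 fun q : ℝ × ℝ => pdy u q.1 q.2 := contDiff_pdy hu le_rfl
  have cvs : ContDiff ℝ 0 fun q : ℝ × ℝ => pdx v q.1 q.2 := contDiff_pdx hv (zero_add 1).le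
  have cvt : ContDiff ℝ 0 fun q : ℝ × ℝ => pdy v q.1 q.2 := contDiff_pdy hv (zero_add 1).le
  have cf : ContDiff ℝ 1 (uncurry (carlemanFluxFst κ τ u v)) := contDiff_carlemanFluxFst hu hv
  have cg : ContDiff ℝ 1 (uncurry (carlemanFluxSnd κ τ u v)) := contDiff_carlemanFluxSnd hu hv
  have cfs : ContDiff ℝ 0 fun q : ℝ × ℝ => pdx (carlemanFluxFst κ τ u v) q.1 q.2 :=
    contDiff_pdx cf (zero_add 1).le
  have cgt : ContDiff ℝ 0 fun q : ℝ × ℝ => pdy (carlemanFluxSnd κ τ u v) q.1 q.2 :=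
    contDiff_pdy cg (zero_add 1).le
  have hdiv := integral_divergence_eq_zero cf cg hab
    (fun q hq => by simp [carlemanFluxFst, hu0 q hq, hv0 q hq])
    fun q hq => by simp [carlemanFluxSnd, hu0 q hq, hv0 q hq]
  rw [← integral_const_mul, ← zero_add (∫ q in Icc a b, _), ← hdiv, ← integral_add]
  rotate_left
  iterate 2 exact Continuous.integrableOn_Icc (by fun_prop)
  refine setIntegral_mono_on (Continuous.integrableOn_Icc (by fun_prop))
    (Continuous.integrableOn_Icc (by fun_prop)) measurableSet_Icc fun q _ => ?_
  have hvq : 0 ≤ 4 * τ * (1 - κ) * (κ * v q.1 q.2 ^ 2) :=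
    mul_nonneg (mul_nonneg (by positivity) (sub_nonneg.2 hκ.2)) (mul_nonneg hκ.1 (sq_nonneg _))
  have hsq := sq_nonneg (pdy u q.1 q.2 - 2 * τ * (1 - q.2) * u q.1 q.2 -
    κ * (pdx v q.1 q.2 - 2 * τ * (q.1 - 1) * v q.1 q.2))
  have hsq' := mul_nonneg hκ.1 (sq_nonneg (pdy v q.1 q.2 - 2 * τ * (1 - q.2) * v q.1 q.2 +
    pdx u q.1 q.2 - 2 * τ * (q.1 - 1) * u q.1 q.2))
  linear_combination carleman_identity (κ := κ) (τ := τ) hu hv q.1 q.2 + hvq + hsq + hsq'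

end Carleman

/-- The quadratic polynomial `φ` whose positivity set in `[0, 2] × [0, 1]` is the triangle
`t < s < 2 - t`. -/
def triangleWeight (s t : ℝ) : ℝ := (1 - t) ^ 2 - (s - 1) ^ 2

theorem triangleWeight_pos_iff {s t : ℝ} (ht : t ≤ 1) :
    0 < triangleWeight s t ↔ t < s ∧ s < 2 - t := by
  simp only [triangleWeight, sub_pos, sq_lt_sq, abs_lt, abs_of_nonneg (sub_nonneg.2 ht)]
  constructor <;> rintro ⟨h1, h2⟩ <;> constructor <;> linarith

theorem continuous_triangleWeight : Continuous fun q : ℝ × ℝ => triangleWeight q.1 q.2 := by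
  simp only [triangleWeight]
  fun_prop

theorem hasDerivAt_triangleWeight_fst (s t : ℝ) :
    HasDerivAt (fun s => triangleWeight s t) (-2 * (s - 1)) s :=
  ((((hasDerivAt_id s).sub_const 1).pow 2).const_sub ((1 - t) ^ 2)).congr_deriv (by simp)

theorem hasDerivAt_triangleWeight_snd (s t : ℝ) :
    HasDerivAt (triangleWeight s) (-2 * (1 - t)) t :=
  ((((hasDerivAt_id t).const_sub 1).pow 2).sub_const ((s - 1) ^ 2)).congr_deriv (by simp)

/-- The function `f` multiplied by the weight `ω ∘ φ`. -/
def weighted (ω : ℝ → ℝ) (f : ℝ → ℝ → ℝ) (s t : ℝ) : ℝ := ω (triangleWeight s t) * f s t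

section Weighted

variable {ω : ℝ → ℝ} {f : ℝ → ℝ → ℝ}

theorem contDiff_weighted {n : WithTop ℕ∞} (hω : ContDiff ℝ n ω) (hf : ContDiff ℝ n (uncurry f)) :
    ContDiff ℝ n (uncurry (weighted ω f)) :=
  (hω.comp (f := fun q : ℝ × ℝ => (1 - q.2) ^ 2 - (q.1 - 1) ^ 2) (by fun_prop)).mul hf

theorem pdx_weighted (hω : Differentiable ℝ ω) (hf : Differentiable ℝ (uncurry f)) (s t : ℝ) :
    pdx (weighted ω f) s t =
      deriv ω (triangleWeight s t) * (-2 * (s - 1)) * f s t + ω (triangleWeight s t) * pdx f s t :=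
  (((hω _).hasDerivAt.comp s (hasDerivAt_triangleWeight_fst s t)).mul (hasDerivAt_pdx hf s t)).deriv

theorem pdy_weighted (hω : Differentiable ℝ ω) (hf : Differentiable ℝ (uncurry f)) (s t : ℝ) :
    pdy (weighted ω f) s t =
      deriv ω (triangleWeight s t) * (-2 * (1 - t)) * f s t + ω (triangleWeight s t) * pdy f s t :=
  (((hω _).hasDerivAt.comp t (hasDerivAt_triangleWeight_snd s t)).mul (hasDerivAt_pdy hf s t)).deriv

theorem weighted_eq_zero_of_boundary (hω : ∀ z ≤ 0, ω z = 0) (hf : ∀ s ∈ Ioo (0 : ℝ) 2, f s 0 = 0)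
    {q : ℝ × ℝ} (hq : q ∈ Icc (0, 0) (2, 1) \ Ioo (0 : ℝ) 2 ×ˢ Ioo (0 : ℝ) 1) :
    weighted ω f q.1 q.2 = 0 := by
  obtain ⟨⟨⟨_, h₂⟩, _, h₄⟩, hq⟩ := hq
  by_cases hpos : 0 < triangleWeight q.1 q.2
  · obtain ⟨hl, hr⟩ := (triangleWeight_pos_iff h₄).1 hpos
    have ht : q.2 = 0 := by
      refine le_antisymm (not_lt.1 fun ht => hq ⟨⟨?_, ?_⟩, ht, ?_⟩) h₂ <;> linarith
    rw [weighted, ht, hf q.1 ⟨by linarith, by linarith⟩, mul_zero]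
  · rw [weighted, hω _ (not_lt.1 hpos), zero_mul]

end Weighted

/-- The quadratic form in `a` and `b` that multiplies `(ω' - τ ω) ^ 2` when `∂ₜ(ωa) + κ ∂ₛ(ωb)` is
expanded. -/
def carlemanRemainder (κ : ℝ) (a b : ℝ → ℝ → ℝ) (s t : ℝ) : ℝ :=
  8 * ((1 - t) * a s t + κ * (s - 1) * b s t) ^ 2 + 4 * κ * ((1 - t) * b s t - (s - 1) * a s t) ^ 2

theorem continuous_carlemanRemainder {a b : ℝ → ℝ → ℝ} (κ : ℝ) (ha : Continuous (uncurry a))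
    (hb : Continuous (uncurry b)) :
    Continuous fun q : ℝ × ℝ => carlemanRemainder κ a b q.1 q.2 := by
  have ca : Continuous fun q : ℝ × ℝ => a q.1 q.2 := ha
  have cb : Continuous fun q : ℝ × ℝ => b q.1 q.2 := hb
  simp only [carlemanRemainder]
  fun_prop

theorem carlemanRemainder_nonneg {κ : ℝ} (hκ : 0 ≤ κ) (a b : ℝ → ℝ → ℝ) (s t : ℝ) :
    0 ≤ carlemanRemainder κ a b s t := by
  rw [carlemanRemainder]
  positivity

theorem weighted_carleman_inequality {κ τ : ℝ} {ω : ℝ → ℝ} {a b : ℝ → ℝ → ℝ} (hκ : κ ∈ Icc 0 1)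
    (hτ : 0 ≤ τ) (hω : ContDiff ℝ 2 ω) (hω0 : ∀ z ≤ 0, ω z = 0) (ha : ContDiff ℝ 2 (uncurry a))
    (hb : ContDiff ℝ 1 (uncurry b)) (hba : pdy b = pdx a) (ha0 : ∀ s ∈ Ioo (0 : ℝ) 2, a s 0 = 0)
    (hb0 : ∀ s ∈ Ioo (0 : ℝ) 2, b s 0 = 0) :
    4 * τ * (1 - κ) * ∫ q : ℝ × ℝ in Icc (0, 0) (2, 1), weighted ω a q.1 q.2 ^ 2 ≤
      ∫ q : ℝ × ℝ in Icc (0, 0) (2, 1),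
        (2 * weighted ω (fun s t => pdy a s t + κ * pdx b s t) q.1 q.2 ^ 2 +
          (deriv ω (triangleWeight q.1 q.2) - τ * ω (triangleWeight q.1 q.2)) ^ 2 *
            carlemanRemainder κ a b q.1 q.2) := by
  have hωd : Differentiable ℝ ω := hω.differentiable two_ne_zero
  have had : Differentiable ℝ (uncurry a) := ha.differentiable two_ne_zero
  have hbd : Differentiable ℝ (uncurry b) := hb.differentiable one_ne_zero
  have hwa : ContDiff ℝ 2 (uncurry (weighted ω a)) := contDiff_weighted hω ha
  have hwb : ContDiff ℝ 1 (uncurry (weighted ω b)) := contDiff_weighted (hω.of_le one_le_two) hb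
  refine (carleman_inequality hκ hτ hwa hwb (by norm_num)
    (fun q hq => weighted_eq_zero_of_boundary hω0 ha0 hq)
    fun q hq => weighted_eq_zero_of_boundary hω0 hb0 hq).trans
      (integral_mono_of_nonneg (.of_forall fun q => add_nonneg (sq_nonneg _)
        (mul_nonneg hκ.1 (sq_nonneg _))) (Continuous.integrableOn_Icc ?_) (.of_forall fun q => ?_))
  · have cφ := continuous_triangleWeight
    have cω : Continuous ω := hω.continuous
    have cω' : Continuous (deriv ω) := hω.continuous_deriv one_le_two
    have cR := continuous_carlemanRemainder κ had.continuous hbd.continuous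
    have cat : Continuous fun q : ℝ × ℝ => pdy a q.1 q.2 := (differentiable_pdy ha).continuous
    have cbs : Continuous fun q : ℝ × ℝ => pdx b q.1 q.2 :=
      (contDiff_pdx (m := 0) hb (zero_add 1).le).continuous
    simp only [weighted]
    fun_prop
  dsimp only
  rw [pdx_weighted hωd had, pdx_weighted hωd hbd, pdy_weighted hωd had, pdy_weighted hωd hbd, hba]
  simp only [weighted, carlemanRemainder]
  set w := ω (triangleWeight q.1 q.2)
  set w' := deriv ω (triangleWeight q.1 q.2)
  have hsq := sq_nonneg (w * (pdy a q.1 q.2 + κ * pdx b q.1 q.2) +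
    2 * (w' - τ * w) * ((1 - q.2) * a q.1 q.2 + κ * (q.1 - 1) * b q.1 q.2))
  linear_combination hsq

theorem sq_integral_le_measureReal_mul_integral_sq {α : Type*} {m : MeasurableSpace α}
    {μ : Measure α} [IsFiniteMeasure μ] {f : α → ℝ} (hf : Integrable f μ)
    (hf2 : Integrable (fun x => f x ^ 2) μ) :
    (∫ x, f x ∂μ) ^ 2 ≤ μ.real univ * ∫ x, f x ^ 2 ∂μ := by
  have hquad (c : ℝ) :
      0 ≤ μ.real univ * (c * c) + -2 * (∫ x, f x ∂μ) * c + ∫ x, f x ^ 2 ∂μ := by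
    have hlin : Integrable (fun x => c * c + f x * (-2 * c)) μ :=
      (integrable_const _).add (hf.mul_const _)
    calc 0 ≤ ∫ x, (c * c + f x * (-2 * c) + f x ^ 2) ∂μ :=
          integral_nonneg fun x => (sq_nonneg (c - f x)).trans_eq (by ring)
      _ = _ := by
          rw [integral_add hlin hf2, integral_add (integrable_const _) (hf.mul_const _),
            integral_const, smul_eq_mul, integral_mul_const]
          ring
  have hdiscrim := discrim_le_zero hquad
  rw [discrim] at hdiscrim
  linarith

theorem sq_mul_intervalIntegral_le {w h : ℝ → ℝ} {a b m x : ℝ} (hw : Continuous w)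
    (hh : Continuous h) (hm : m ∈ Icc a b) (hx : x ∈ Icc a b) (hwx : 0 ≤ w x)
    (hmono : ∀ y ∈ uIcc m x, w x ≤ w y) :
    (w x * ∫ y in m..x, h y) ^ 2 ≤ (b - a) * ∫ y in Icc a b, (w y * h y) ^ 2 := by
  have habs : |w x * ∫ y in m..x, h y| ≤ ∫ y in Icc a b, |w y * h y| := by
    calc |w x * ∫ y in m..x, h y| = w x * |∫ y in m..x, h y| := by rw [abs_mul, abs_of_nonneg hwx]
      _ ≤ w x * ∫ y in uIoc m x, |h y| :=
          mul_le_mul_of_nonneg_left (intervalIntegral.norm_integral_le_integral_norm_uIoc (f := h))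
            hwx
      _ = ∫ y in uIoc m x, w x * |h y| := (integral_const_mul _ _).symm
      _ ≤ ∫ y in uIoc m x, |w y * h y| := by
          refine setIntegral_mono_on (Continuous.integrableOn_uIoc (by fun_prop))
            (Continuous.integrableOn_uIoc (by fun_prop)) measurableSet_uIoc fun y hy => ?_
          rw [abs_mul]
          exact mul_le_mul_of_nonneg_right
            ((hmono y (uIoc_subset_uIcc hy)).trans (le_abs_self _)) (abs_nonneg _)
      _ ≤ ∫ y in Icc a b, |w y * h y| :=
          setIntegral_mono_set (Continuous.integrableOn_Icc (by fun_prop))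
            (.of_forall fun _ => abs_nonneg _)
            (uIoc_subset_uIcc.trans (uIcc_subset_Icc hm hx)).eventuallyLE
  calc (w x * ∫ y in m..x, h y) ^ 2 ≤ (∫ y in Icc a b, |w y * h y|) ^ 2 :=
        sq_le_sq.2 (habs.trans (le_abs_self _))
    _ ≤ volume.real (Icc a b) * ∫ y in Icc a b, |w y * h y| ^ 2 := by
        rw [← measureReal_restrict_apply_univ]
        exact sq_integral_le_measureReal_mul_integral_sq
          (Continuous.integrableOn_Icc (by fun_prop)) (Continuous.integrableOn_Icc (by fun_prop))
    _ = (b - a) * ∫ y in Icc a b, (w y * h y) ^ 2 := by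
        simp only [Real.volume_real_Icc_of_le (hm.1.trans hm.2), sq_abs]

theorem setIntegral_Icc_prod {f : ℝ × ℝ → ℝ} (hf : Continuous f) (a b : ℝ × ℝ) :
    ∫ q in Icc a b, f q = ∫ s in Icc a.1 b.1, ∫ t in Icc a.2 b.2, f (s, t) := by
  have hint : IntegrableOn f (Icc a.1 b.1 ×ˢ Icc a.2 b.2) (volume.prod volume) := by
    rw [Icc_prod_Icc]
    exact hf.integrableOn_Icc
  rw [← setIntegral_prod f hint, Icc_prod_Icc]
  rfl

theorem setIntegral_Icc_comp_swap (f : ℝ × ℝ → ℝ) (a b : ℝ × ℝ) :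
    ∫ q in Icc a b, f q.swap = ∫ q in Icc a.swap b.swap, f q := by
  obtain ⟨⟨a₁, a₂⟩, b₁, b₂⟩ := a, b
  simp only [Prod.swap_prod_mk, ← Icc_prod_Icc]
  exact setIntegral_prod_swap _ _ _

section WeightedPrimitive

variable {w h : ℝ × ℝ → ℝ} {a b : ℝ × ℝ} {m : ℝ}

theorem continuous_intervalIntegral_snd (hh : Continuous h) (m : ℝ) :
    Continuous fun q : ℝ × ℝ => ∫ t in m..q.2, h (q.1, t) :=
  intervalIntegral.continuous_parametric_primitive_of_continuous (f := fun s t => h (s, t)) hh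

theorem integral_sq_mul_intervalIntegral_snd_le (hw : Continuous w) (hh : Continuous h)
    (hm : m ∈ Icc a.2 b.2) (hw0 : ∀ q, 0 ≤ w q)
    (hmono : ∀ q ∈ Icc a b, ∀ t ∈ uIcc m q.2, w q ≤ w (q.1, t)) :
    ∫ q in Icc a b, (w q * ∫ t in m..q.2, h (q.1, t)) ^ 2 ≤
      (b.2 - a.2) ^ 2 * ∫ q in Icc a b, (w q * h q) ^ 2 := by
  have hslice : Continuous fun q : ℝ × ℝ => ∫ t in Icc a.2 b.2, (w (q.1, t) * h (q.1, t)) ^ 2 :=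
    continuous_parametric_integral_of_continuous (by fun_prop) isCompact_Icc
  calc ∫ q in Icc a b, (w q * ∫ t in m..q.2, h (q.1, t)) ^ 2
      ≤ ∫ q in Icc a b, (b.2 - a.2) * ∫ t in Icc a.2 b.2, (w (q.1, t) * h (q.1, t)) ^ 2 := by
        refine setIntegral_mono_on (Continuous.integrableOn_Icc (by fun_prop))
          (Continuous.integrableOn_Icc (by fun_prop)) measurableSet_Icc fun q hq => ?_
        exact sq_mul_intervalIntegral_le (w := fun t => w (q.1, t)) (h := fun t => h (q.1, t))
          (by fun_prop) (by fun_prop) hm ⟨hq.1.2, hq.2.2⟩ (hw0 q) (hmono q hq)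
    _ = (b.2 - a.2) ^ 2 * ∫ q in Icc a b, (w q * h q) ^ 2 := by
        rw [setIntegral_Icc_prod (by fun_prop), setIntegral_Icc_prod (by fun_prop),
          ← integral_const_mul]
        simp [hm.1.trans hm.2, sq, mul_assoc]

theorem integral_sq_mul_intervalIntegral_fst_le (hw : Continuous w) (hh : Continuous h)
    (hm : m ∈ Icc a.1 b.1) (hw0 : ∀ q, 0 ≤ w q)
    (hmono : ∀ q ∈ Icc a b, ∀ s ∈ uIcc m q.1, w q ≤ w (s, q.2)) :
    ∫ q in Icc a b, (w q * ∫ s in m..q.1, h (s, q.2)) ^ 2 ≤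
      (b.1 - a.1) ^ 2 * ∫ q in Icc a b, (w q * h q) ^ 2 := by
  have hswap := integral_sq_mul_intervalIntegral_snd_le (a := a.swap) (b := b.swap)
    (hw.comp continuous_swap) (hh.comp continuous_swap) hm (fun q => hw0 q.swap)
    fun q hq s hs => hmono q.swap ⟨⟨hq.1.2, hq.1.1⟩, hq.2.2, hq.2.1⟩ s hs
  rw [← setIntegral_Icc_comp_swap, ← setIntegral_Icc_comp_swap] at hswap
  exact hswap

end WeightedPrimitive

/-! ### Unique continuation in the triangle -/

/-- A smooth step from `0` on `(-∞, 0]` to `1` on `[β, ∞)`. -/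
def cutoff (β z : ℝ) : ℝ := Real.smoothTransition (z / β)

/-- The exponential weight `exp (τ z)`, cut off on the negative half-line. -/
def cutoffExp (β τ z : ℝ) : ℝ := Real.exp (τ * z) * cutoff β z

section Cutoff

variable {β τ z : ℝ}

theorem contDiff_cutoff (β : ℝ) {n : ℕ∞} : ContDiff ℝ n (cutoff β) :=
  Real.smoothTransition.contDiff.comp (contDiff_id.div_const β)

theorem cutoff_nonneg (β z : ℝ) : 0 ≤ cutoff β z := Real.smoothTransition.nonneg _

theorem cutoff_of_nonpos (hβ : 0 < β) (hz : z ≤ 0) : cutoff β z = 0 :=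
  Real.smoothTransition.zero_of_nonpos (div_nonpos_of_nonpos_of_nonneg hz hβ.le)

theorem cutoff_of_le (hβ : 0 < β) (hz : β ≤ z) : cutoff β z = 1 :=
  Real.smoothTransition.one_of_one_le ((one_le_div hβ).2 hz)

theorem monotone_cutoff (hβ : 0 < β) : Monotone (cutoff β) :=
  Real.smoothTransition.monotone.comp fun _ _ h => div_le_div_of_nonneg_right h hβ.le

theorem deriv_cutoff_of_lt (hβ : 0 < β) (hz : β < z) : deriv (cutoff β) z = 0 := by
  have hone : cutoff β =ᶠ[𝓝 z] fun _ => 1 := by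
    filter_upwards [Ioi_mem_nhds hz] with y hy using cutoff_of_le hβ (le_of_lt hy)
  rw [hone.deriv_eq, deriv_const]

theorem contDiff_cutoffExp (β τ : ℝ) {n : ℕ∞} : ContDiff ℝ n (cutoffExp β τ) :=
  (contDiff_const.mul contDiff_id).exp.mul (contDiff_cutoff β)

theorem cutoffExp_nonneg (β τ z : ℝ) : 0 ≤ cutoffExp β τ z :=
  mul_nonneg (Real.exp_pos _).le (cutoff_nonneg β z)

theorem cutoffExp_of_nonpos (hβ : 0 < β) (hz : z ≤ 0) : cutoffExp β τ z = 0 := by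
  rw [cutoffExp, cutoff_of_nonpos hβ hz, mul_zero]

theorem monotone_cutoffExp (hβ : 0 < β) (hτ : 0 ≤ τ) : Monotone (cutoffExp β τ) := fun _ _ h =>
  mul_le_mul (Real.exp_le_exp.2 (mul_le_mul_of_nonneg_left h hτ)) (monotone_cutoff hβ h)
    (cutoff_nonneg β _) (Real.exp_pos _).le

theorem sq_deriv_cutoffExp_sub_le (hβ : 0 < β) (hτ : 0 ≤ τ) (z : ℝ) :
    (deriv (cutoffExp β τ) z - τ * cutoffExp β τ z) ^ 2 ≤
      Real.exp (τ * β) ^ 2 * deriv (cutoff β) z ^ 2 := by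
  have hderiv : deriv (cutoffExp β τ) z =
      τ * cutoffExp β τ z + Real.exp (τ * z) * deriv (cutoff β) z := by
    refine ((((hasDerivAt_id z).const_mul τ).exp.mul ((contDiff_cutoff β (n := 1)).differentiable
      one_ne_zero z).hasDerivAt).congr_deriv ?_).deriv
    simp only [cutoffExp, id]
    ring
  rw [hderiv, add_sub_cancel_left, mul_pow]
  rcases le_or_gt z β with hz | hz
  · gcongr
  · simp [deriv_cutoff_of_lt hβ hz]

theorem exp_mul_cutoff_sub_le (hβ : 0 < β) (hτ : 0 ≤ τ) (z : ℝ) :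
    Real.exp (τ * (2 * β)) * cutoff β (z - 2 * β) ≤ cutoffExp β τ z := by
  rcases le_or_gt z (2 * β) with hz | hz
  · rw [cutoff_of_nonpos hβ (sub_nonpos.2 hz), mul_zero]
    exact cutoffExp_nonneg β τ z
  · rw [cutoffExp, cutoff_of_le hβ (by linarith : β ≤ z)]
    gcongr
    exacts [cutoff_nonneg _ _, Real.smoothTransition.le_one _]

end Cutoff

theorem triangleWeight_le_of_mem_uIcc {s t σ : ℝ} (hσ : σ ∈ uIcc 1 s) :
    triangleWeight s t ≤ triangleWeight σ t := by
  have hsq : (σ - 1) ^ 2 ≤ (s - 1) ^ 2 :=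
    sq_le_sq.2 (abs_sub_left_of_mem_uIcc hσ)
  exact sub_le_sub_left hsq _

theorem triangleWeight_le_of_le {s t θ : ℝ} (hθ : θ ≤ t) (ht : t ≤ 1) :
    triangleWeight s t ≤ triangleWeight s θ :=
  sub_le_sub_right (pow_le_pow_left₀ (sub_nonneg.2 ht) (sub_le_sub_left hθ 1) 2) _

/-- The primitive in `t`, vanishing on `t = 0`, of the lower-order terms
`k ∫₁ˢ H + l H` of the equation for `H`. -/
def sourcePrimitive (k l : ℝ) (H : ℝ → ℝ → ℝ) (s t : ℝ) : ℝ :=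
  ∫ θ in (0 : ℝ)..t, (k * (∫ σ in (1 : ℝ)..s, H σ θ) + l * H s θ)

theorem continuous_intervalIntegral_fst {H : ℝ → ℝ → ℝ} (hH : Continuous (uncurry H)) (m : ℝ) :
    Continuous fun q : ℝ × ℝ => ∫ σ in m..q.1, H σ q.2 :=
  (continuous_intervalIntegral_snd (hH.comp continuous_swap) m).comp continuous_swap

theorem continuous_sourcePrimitive {H : ℝ → ℝ → ℝ} (k l : ℝ) (hH : Continuous (uncurry H)) :
    Continuous fun q : ℝ × ℝ => sourcePrimitive k l H q.1 q.2 :=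
  continuous_intervalIntegral_snd
    (((continuous_intervalIntegral_fst hH 1).const_mul k).add (hH.const_mul l)) 0

theorem integral_sq_weighted_sourcePrimitive_le {ω : ℝ → ℝ} {H : ℝ → ℝ → ℝ} (k l : ℝ)
    (hω : Continuous ω) (hωmono : Monotone ω) (hω0 : ∀ z, 0 ≤ ω z) (hH : Continuous (uncurry H)) :
    ∫ q : ℝ × ℝ in Icc (0, 0) (2, 1), weighted ω (sourcePrimitive k l H) q.1 q.2 ^ 2 ≤
      (8 * k ^ 2 + 2 * l ^ 2) *
        ∫ q : ℝ × ℝ in Icc (0, 0) (2, 1), weighted ω H q.1 q.2 ^ 2 := by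
  have cH : Continuous fun q : ℝ × ℝ => H q.1 q.2 := hH
  have cφ := continuous_triangleWeight
  have hsnd := integral_sq_mul_intervalIntegral_snd_le (a := (0, 0)) (b := (2, 1)) (m := 0)
    (w := fun q => ω (triangleWeight q.1 q.2)) (by fun_prop)
    (h := fun q => k * (∫ σ in (1 : ℝ)..q.1, H σ q.2) + l * H q.1 q.2) (by fun_prop)
    (by norm_num) (fun q => hω0 _) fun q hq t ht =>
      hωmono (triangleWeight_le_of_le (by rw [uIcc_of_le hq.1.2] at ht; exact ht.2) hq.2.2)
  have hfst := integral_sq_mul_intervalIntegral_fst_le (a := (0, 0)) (b := (2, 1)) (m := 1)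
    (w := fun q => ω (triangleWeight q.1 q.2)) (by fun_prop) cH (by norm_num)
    (fun q => hω0 _) fun q _ s hs => hωmono (triangleWeight_le_of_mem_uIcc hs)
  norm_num only [sub_zero, one_pow, one_mul] at hsnd hfst
  refine hsnd.trans ?_
  calc _ ≤ ∫ q : ℝ × ℝ in Icc (0, 0) (2, 1),
        (2 * k ^ 2 * (ω (triangleWeight q.1 q.2) * ∫ σ in (1 : ℝ)..q.1, H σ q.2) ^ 2 +
          2 * l ^ 2 * (ω (triangleWeight q.1 q.2) * H q.1 q.2) ^ 2) := by
        refine setIntegral_mono_on (Continuous.integrableOn_Icc (by fun_prop))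
          (Continuous.integrableOn_Icc (by fun_prop)) measurableSet_Icc fun q _ => ?_
        linear_combination sq_nonneg (ω (triangleWeight q.1 q.2) *
          (k * (∫ σ in (1 : ℝ)..q.1, H σ q.2) - l * H q.1 q.2))
    _ ≤ _ := by
        rw [integral_add (Continuous.integrableOn_Icc (by fun_prop))
          (Continuous.integrableOn_Icc (by fun_prop)), integral_const_mul, integral_const_mul]
        simp only [weighted]
        linear_combination (2 * k ^ 2) * hfst

/-- The primitive in `t` of `∂ₛH` vanishing on `t = 0`, which turns the second-order operator
`∂ₜ² + κ ∂ₛ²` into a first-order system. -/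
def conjugate (H : ℝ → ℝ → ℝ) (s t : ℝ) : ℝ := ∫ θ in (0 : ℝ)..t, pdx H s θ

section Conjugate

variable {H : ℝ → ℝ → ℝ}

theorem hasDerivAt_conjugate_fst (hH : ContDiff ℝ 2 (uncurry H)) (s t : ℝ) :
    HasDerivAt (fun s => conjugate H s t) (∫ θ in (0 : ℝ)..t, pdx (pdx H) s θ) s :=
  hasDerivAt_intervalIntegral_of_continuous (differentiable_pdx hH).continuous
    (contDiff_pdx (m := 0) (contDiff_pdx (m := 1) hH le_rfl) (zero_add 1).le).continuous
    (fun s θ => hasDerivAt_pdx (differentiable_pdx hH) s θ) 0 t s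

theorem hasDerivAt_conjugate_snd (hH : ContDiff ℝ 2 (uncurry H)) (s t : ℝ) :
    HasDerivAt (conjugate H s) (pdx H s t) t :=
  (((differentiable_pdx hH).continuous.comp (Continuous.prodMk_right s)).integral_hasStrictDerivAt
    0 t).hasDerivAt

theorem pdy_conjugate (hH : ContDiff ℝ 2 (uncurry H)) : pdy (conjugate H) = pdx H :=
  funext₂ fun s t => (hasDerivAt_conjugate_snd hH s t).deriv

theorem contDiff_conjugate (hH : ContDiff ℝ 2 (uncurry H)) :
    ContDiff ℝ 1 (uncurry (conjugate H)) := by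
  have hHxx : ContDiff ℝ 0 (uncurry (pdx (pdx H))) :=
    contDiff_pdx (contDiff_pdx (m := 1) hH le_rfl) (zero_add 1).le
  exact contDiff_succ_of_partials (n := 0) (hasDerivAt_conjugate_fst hH)
    (hasDerivAt_conjugate_snd hH)
    (contDiff_zero.2 (continuous_intervalIntegral_snd hHxx.continuous 0))
    (contDiff_pdx hH (by norm_num))

end Conjugate

theorem eqOn_zero_of_setIntegral_eq_zero {X : Type*} [TopologicalSpace X] [MeasurableSpace X]
    {μ : Measure X} [μ.IsOpenPosMeasure] {s : Set X} {f : X → ℝ} (hs : MeasurableSet s)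
    (hsi : s ⊆ closure (interior s)) (hf : ContinuousOn f s) (hint : IntegrableOn f s μ)
    (hf0 : ∀ x ∈ s, 0 ≤ f x) (h : ∫ x in s, f x ∂μ = 0) : EqOn f 0 s :=
  Measure.eqOn_of_ae_eq ((setIntegral_eq_zero_iff_of_nonneg_ae
    (ae_restrict_of_forall_mem hs hf0) hint).1 h) hf continuousOn_const hsi

/-- `H` solves `H_tt + κ H_ss = k ∫₁ˢ H + l H` in the triangle `0 ≤ t < s < 2 - t` with zero Cauchy
data on the side `t = 0`. -/
structure IsCauchySolution (κ k l : ℝ) (H : ℝ → ℝ → ℝ) : Prop where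
  contDiff : ContDiff ℝ 2 (uncurry H)
  equation : ∀ s t, 0 ≤ t → t < s → s < 2 - t →
    pdy (pdy H) s t + κ * pdx (pdx H) s t = k * (∫ σ in (1 : ℝ)..s, H σ t) + l * H s t
  right_zero : ∀ s ∈ Ioo (0 : ℝ) 2, H s 0 = 0
  pdy_right_zero : ∀ s ∈ Ioo (0 : ℝ) 2, pdy H s 0 = 0

namespace IsCauchySolution

variable {κ k l β : ℝ} {H : ℝ → ℝ → ℝ}

theorem pdy_add_pdx_conjugate (h : IsCauchySolution κ k l H) {s t : ℝ} (ht : 0 ≤ t) (hts : t < s)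
    (hst : s < 2 - t) : pdy H s t + κ * pdx (conjugate H) s t = sourcePrimitive k l H s t := by
  have hHt : ContDiff ℝ 1 (uncurry (pdy H)) := contDiff_pdy h.contDiff le_rfl
  have hHs : ContDiff ℝ 1 (uncurry (pdx H)) := contDiff_pdx h.contDiff le_rfl
  have cslice {f : ℝ → ℝ → ℝ} (hf : ContDiff ℝ 0 (uncurry f)) : Continuous (f s) :=
    hf.continuous.comp (Continuous.prodMk_right s)
  have chtt := cslice (contDiff_pdy hHt (zero_add 1).le)
  have chss := cslice (contDiff_pdx hHs (zero_add 1).le)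
  have hftc : ∫ θ in (0 : ℝ)..t, pdy (pdy H) s θ = pdy H s t := by
    rw [intervalIntegral.integral_eq_sub_of_hasDerivAt
      (fun θ _ => hasDerivAt_pdy (differentiable_pdy h.contDiff) s θ) (chtt.intervalIntegrable _ _),
      h.pdy_right_zero s ⟨by linarith, by linarith⟩, sub_zero]
  have hint : IntervalIntegrable (fun θ => κ * pdx (pdx H) s θ) volume 0 t :=
    (continuous_const.mul chss).intervalIntegrable _ _
  rw [← hftc, show pdx (conjugate H) s t = _ from (hasDerivAt_conjugate_fst h.contDiff s t).deriv,
    ← intervalIntegral.integral_const_mul,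
    ← intervalIntegral.integral_add (chtt.intervalIntegrable _ _) hint]
  refine intervalIntegral.integral_congr fun θ hθ => ?_
  rw [uIcc_of_le ht] at hθ
  exact h.equation s θ hθ.1 (by linarith [hθ.2]) (by linarith [hθ.2])

theorem weighted_pdy_add_pdx_conjugate (h : IsCauchySolution κ k l H) {ω : ℝ → ℝ}
    (hω : ∀ z ≤ 0, ω z = 0) {q : ℝ × ℝ} (hq : q ∈ Icc (0, 0) (2, 1)) :
    weighted ω (fun s t => pdy H s t + κ * pdx (conjugate H) s t) q.1 q.2 =
      weighted ω (sourcePrimitive k l H) q.1 q.2 := by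
  rcases le_or_gt (triangleWeight q.1 q.2) 0 with hφ | hφ
  · simp only [weighted, hω _ hφ, zero_mul]
  · obtain ⟨hts, hst⟩ := (triangleWeight_pos_iff hq.2.2).1 hφ
    simp only [weighted, h.pdy_add_pdx_conjugate hq.1.2 hts hst]

theorem carleman (h : IsCauchySolution κ k l H) (hκ : κ ∈ Icc 0 1) (hβ : 0 < β) {τ : ℝ}
    (hτ : 0 ≤ τ) :
    4 * τ * (1 - κ) *
        ∫ q : ℝ × ℝ in Icc (0, 0) (2, 1), weighted (cutoffExp β τ) H q.1 q.2 ^ 2 ≤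
      2 * ((8 * k ^ 2 + 2 * l ^ 2) *
          ∫ q : ℝ × ℝ in Icc (0, 0) (2, 1), weighted (cutoffExp β τ) H q.1 q.2 ^ 2) +
        Real.exp (τ * β) ^ 2 * ∫ q : ℝ × ℝ in Icc (0, 0) (2, 1),
          deriv (cutoff β) (triangleWeight q.1 q.2) ^ 2 *
            carlemanRemainder κ H (conjugate H) q.1 q.2 := by
  have hω0 : ∀ z ≤ 0, cutoffExp β τ z = 0 := fun z hz => cutoffExp_of_nonpos hβ hz
  have cω : Continuous (cutoffExp β τ) := (contDiff_cutoffExp β τ (n := 0)).continuous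
  have cχ' : Continuous (deriv (cutoff β)) := (contDiff_cutoff β (n := 1)).continuous_deriv le_rfl
  have cφ := continuous_triangleWeight
  have cR := continuous_carlemanRemainder κ h.contDiff.continuous
    (contDiff_conjugate h.contDiff).continuous
  have cF := continuous_sourcePrimitive k l h.contDiff.continuous
  have cwF : Continuous fun q : ℝ × ℝ =>
      weighted (cutoffExp β τ) (sourcePrimitive k l H) q.1 q.2 := (cω.comp cφ).mul cF
  have hsource := integral_sq_weighted_sourcePrimitive_le k l cω (monotone_cutoffExp hβ hτ)
    (cutoffExp_nonneg β τ) h.contDiff.continuous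
  refine (weighted_carleman_inequality hκ hτ (contDiff_cutoffExp β τ (n := 2)) hω0 h.contDiff
    (contDiff_conjugate h.contDiff) (pdy_conjugate h.contDiff) h.right_zero
    fun s _ => intervalIntegral.integral_same).trans ?_
  refine le_trans ?_ (add_le_add_left (mul_le_mul_of_nonneg_left hsource zero_le_two) _)
  rw [← integral_const_mul, ← integral_const_mul,
    ← integral_add (Continuous.integrableOn_Icc (by fun_prop))
      (Continuous.integrableOn_Icc (by fun_prop))]
  refine integral_mono_of_nonneg ?_ (Continuous.integrableOn_Icc (by fun_prop)) ?_
  · exact .of_forall fun q => add_nonneg (by positivity)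
      (mul_nonneg (sq_nonneg _) (carlemanRemainder_nonneg hκ.1 ..))
  filter_upwards [ae_restrict_mem measurableSet_Icc] with q hq
  rw [h.weighted_pdy_add_pdx_conjugate hω0 hq, ← mul_assoc]
  gcongr
  · exact carlemanRemainder_nonneg hκ.1 ..
  · exact sq_deriv_cutoffExp_sub_le hβ hτ _

theorem exists_integral_sq_weighted_le (h : IsCauchySolution κ k l H) (hκ : κ ∈ Ico 0 1)
    (hβ : 0 < β) : ∃ D τ₀ : ℝ, ∀ τ ≥ τ₀,
      ∫ q : ℝ × ℝ in Icc (0, 0) (2, 1), weighted (cutoffExp β τ) H q.1 q.2 ^ 2 ≤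
        Real.exp (τ * β) ^ 2 * D := by
  have hκ1 : 0 < 1 - κ := sub_pos.2 hκ.2
  refine ⟨∫ q : ℝ × ℝ in Icc (0, 0) (2, 1), deriv (cutoff β) (triangleWeight q.1 q.2) ^ 2 *
    carlemanRemainder κ H (conjugate H) q.1 q.2,
    (2 * (8 * k ^ 2 + 2 * l ^ 2) + 1) / (4 * (1 - κ)), fun τ hτ => ?_⟩
  have habsorb := (div_le_iff₀ (by positivity)).1 hτ
  have hnonneg : 0 ≤ ∫ q : ℝ × ℝ in Icc (0, 0) (2, 1), weighted (cutoffExp β τ) H q.1 q.2 ^ 2 :=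
    integral_nonneg fun _ => sq_nonneg _
  linear_combination h.carleman (Ico_subset_Icc_self hκ) hβ ((by positivity : (0 : ℝ) ≤ _).trans hτ)
    + mul_le_mul_of_nonneg_right habsorb hnonneg

theorem integral_sq_weighted_cutoff_eq_zero (h : IsCauchySolution κ k l H) (hκ : κ ∈ Ico 0 1)
    (hβ : 0 < β) : ∫ q : ℝ × ℝ in Icc (0, 0) (2, 1),
      weighted (fun z => cutoff β (z - 2 * β)) H q.1 q.2 ^ 2 = 0 := by
  obtain ⟨D, τ₀, hD⟩ := h.exists_integral_sq_weighted_le hκ hβ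
  refine le_antisymm ?_ (integral_nonneg fun _ => sq_nonneg _)
  have hdecay : Tendsto (fun τ => Real.exp (-(τ * β)) ^ 2 * D) atTop (𝓝 0) := by
    simpa using ((Real.tendsto_exp_neg_atTop_nhds_zero.comp
      (tendsto_id.atTop_mul_const hβ)).pow 2).mul_const D
  refine ge_of_tendsto hdecay ?_
  filter_upwards [eventually_ge_atTop τ₀, eventually_ge_atTop 0] with τ hτ₀ hτ
  have cw : Continuous fun q : ℝ × ℝ => weighted (cutoffExp β τ) H q.1 q.2 :=
    ((contDiff_cutoffExp β τ (n := 0)).continuous.comp continuous_triangleWeight).mul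
      h.contDiff.continuous
  have hmul : Real.exp (τ * (2 * β)) ^ 2 * ∫ q : ℝ × ℝ in Icc (0, 0) (2, 1),
      weighted (fun z => cutoff β (z - 2 * β)) H q.1 q.2 ^ 2 ≤ Real.exp (τ * β) ^ 2 * D := by
    refine le_trans ?_ (hD τ hτ₀)
    rw [← integral_const_mul]
    refine integral_mono_of_nonneg (.of_forall fun q => by positivity)
      (Continuous.integrableOn_Icc (by fun_prop)) (.of_forall fun q => ?_)
    simp only [weighted]
    rw [← mul_pow, ← mul_assoc, mul_pow, mul_pow (cutoffExp β τ _)]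
    exact mul_le_mul_of_nonneg_right (pow_le_pow_left₀
      (mul_nonneg (Real.exp_pos _).le (cutoff_nonneg _ _))
      (exp_mul_cutoff_sub_le hβ hτ _) 2) (sq_nonneg _)
  have hexp : Real.exp (τ * (2 * β)) = Real.exp (τ * β) ^ 2 := by
    rw [← Real.exp_nat_mul]
    ring_nf
  rw [hexp] at hmul
  rw [Real.exp_neg, inv_pow, inv_mul_eq_div, le_div_iff₀ (by positivity)]
  refine le_of_mul_le_mul_left ?_ (pow_pos (Real.exp_pos (τ * β)) 2)
  linarith

theorem eq_zero (h : IsCauchySolution κ k l H) (hκ : κ ∈ Ico 0 1) {s t : ℝ} (ht : 0 ≤ t)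
    (hts : t < s) (hst : s < 2 - t) : H s t = 0 := by
  set β := triangleWeight s t / 3 with hβdef
  have hβ : 0 < β := div_pos ((triangleWeight_pos_iff (by linarith)).2 ⟨hts, hst⟩) three_pos
  have cw : Continuous fun q : ℝ × ℝ => weighted (fun z => cutoff β (z - 2 * β)) H q.1 q.2 :=
    ((contDiff_cutoff β (n := 0)).continuous.comp
      (continuous_triangleWeight.sub continuous_const)).mul h.contDiff.continuous
  have hzero := eqOn_zero_of_setIntegral_eq_zero measurableSet_Icc
    (by rw [← Icc_prod_Icc, interior_prod_eq, interior_Icc, interior_Icc, closure_prod_eq,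
      closure_Ioo two_ne_zero.symm, closure_Ioo one_ne_zero.symm])
    (cw.pow 2).continuousOn (cw.pow 2).integrableOn_Icc (fun _ _ => sq_nonneg _)
    (h.integral_sq_weighted_cutoff_eq_zero hκ hβ)
    (show (s, t) ∈ Icc (0, 0) (2, 1) from
      ⟨⟨by linarith, ht⟩, by linarith, by linarith⟩)
  have hone : cutoff β (triangleWeight s t - 2 * β) = 1 := cutoff_of_le hβ (by linarith)
  simpa [weighted, hone] using hzero

end IsCauchySolution

/-! ### Uniqueness -/

theorem pdx_pdx_pdx_sub {f g : ℝ → ℝ → ℝ} (hf : ContDiff ℝ 3 (uncurry f))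
    (hg : ContDiff ℝ 3 (uncurry g)) :
    pdx (pdx (pdx (f - g))) = pdx (pdx (pdx f)) - pdx (pdx (pdx g)) := by
  have hfx : ContDiff ℝ 2 (uncurry (pdx f)) := contDiff_pdx hf (by norm_num)
  have hgx : ContDiff ℝ 2 (uncurry (pdx g)) := contDiff_pdx hg (by norm_num)
  rw [pdx_sub (hf.differentiable three_ne_zero) (hg.differentiable three_ne_zero),
    pdx_sub (hfx.differentiable two_ne_zero) (hgx.differentiable two_ne_zero),
    pdx_sub (differentiable_pdx hfx) (differentiable_pdx hgx)]

theorem pdy_pdy_sub {f g : ℝ → ℝ → ℝ} (hf : ContDiff ℝ 2 (uncurry f))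
    (hg : ContDiff ℝ 2 (uncurry g)) : pdy (pdy (f - g)) = pdy (pdy f) - pdy (pdy g) := by
  rw [pdy_sub (hf.differentiable two_ne_zero) (hg.differentiable two_ne_zero),
    pdy_sub (differentiable_pdy hf) (differentiable_pdy hg)]

theorem pdx_comp_sub_const (f : ℝ → ℝ → ℝ) (a : ℝ) :
    pdx (fun s => f (s - a)) = fun s => pdx f (s - a) :=
  funext₂ fun s t => deriv_comp_sub_const (f := fun s => f s t) a s

theorem pdy_comp_sub_const (f : ℝ → ℝ → ℝ) (a : ℝ) :
    pdy (fun s => f (s - a)) = fun s => pdy f (s - a) := rfl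

theorem integral_pdx {f : ℝ → ℝ → ℝ} (hf : ContDiff ℝ 1 (uncurry f)) (a s t : ℝ) :
    ∫ σ in a..s, pdx f σ t = f s t - f a t :=
  intervalIntegral.integral_eq_sub_of_hasDerivAt
    (fun σ _ => hasDerivAt_pdx (hf.differentiable one_ne_zero) σ t)
    (((contDiff_pdx (m := 0) hf (zero_add 1).le).continuous.comp
      (Continuous.prodMk_left t)).intervalIntegrable _ _)

theorem pdx_eq_zero_of_forall_mem_Ioo {f : ℝ → ℝ → ℝ} {a b t : ℝ}
    (hf : ∀ s ∈ Ioo a b, f s t = 0) : ∀ s ∈ Ioo a b, pdx f s t = 0 := fun s hs => by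
  have hzero : (fun s => f s t) =ᶠ[𝓝 s] fun _ => 0 := eventually_of_mem (Ioo_mem_nhds hs.1 hs.2) hf
  rw [pdx, hzero.deriv_eq, deriv_const]

section Corrected

variable {lam : ℝ} {Y : ℝ → ℝ → ℝ}

theorem isCauchySolution_pdx (hY : ContDiff ℝ 3 (uncurry Y))
    (heq : ∀ s t, 0 ≤ t → t < s → s < 2 - t →
      2 * pdx (pdx (pdx Y)) s t + 6 * pdx (pdy (pdy Y)) s t + 2 * pdx Y s t =
        lam * (Y s t - Y 1 t))
    (h0 : ∀ s ∈ Ioo (0 : ℝ) 2, Y s 0 = 0) (h1 : ∀ s ∈ Ioo (0 : ℝ) 2, pdy Y s 0 = 0) :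
    IsCauchySolution (1 / 3) (lam / 6) (-1 / 3) (pdx Y) where
  contDiff := contDiff_pdx hY (by norm_num)
  equation s t ht hts hst := by
    rw [integral_pdx (hY.of_le (by norm_num)), ← pdx_pdy_comm (hY.of_le (by norm_num)),
      ← pdx_pdy_comm (contDiff_pdy hY (by norm_num))]
    linear_combination heq s t ht hts hst / 6
  right_zero := pdx_eq_zero_of_forall_mem_Ioo h0
  pdy_right_zero := by
    rw [← pdx_pdy_comm (hY.of_le (by norm_num))]
    exact pdx_eq_zero_of_forall_mem_Ioo h1

theorem eq_slice_one (hY : ContDiff ℝ 3 (uncurry Y))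
    (heq : ∀ s t, 0 ≤ t → t < s → s < 2 - t →
      2 * pdx (pdx (pdx Y)) s t + 6 * pdx (pdy (pdy Y)) s t + 2 * pdx Y s t =
        lam * (Y s t - Y 1 t))
    (h0 : ∀ s ∈ Ioo (0 : ℝ) 2, Y s 0 = 0) (h1 : ∀ s ∈ Ioo (0 : ℝ) 2, pdy Y s 0 = 0)
    {s t : ℝ} (ht : 0 ≤ t) (hts : t ≤ s) (hst : s < 2 - t) : Y s t = Y 1 t := by
  have hlt : t < 2 - t := hts.trans_lt hst
  have hopen : EqOn (fun s => Y s t) (fun _ => Y 1 t) (Ioo t (2 - t)) := fun σ hσ => by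
    have hsub : uIcc 1 σ ⊆ Ioo t (2 - t) :=
      ordConnected_Ioo.uIcc_subset ⟨by linarith, by linarith⟩ hσ
    have hint := integral_pdx (hY.of_le (by norm_num)) 1 σ t
    rw [intervalIntegral.integral_congr (g := 0) fun τ hτ =>
      (isCauchySolution_pdx hY heq h0 h1).eq_zero ⟨by norm_num, by norm_num⟩ ht
        (hsub hτ).1 (hsub hτ).2] at hint
    simp only [Pi.zero_apply, intervalIntegral.integral_zero] at hint
    exact sub_eq_zero.1 hint.symm
  refine hopen.closure (hY.continuous.comp (Continuous.prodMk_left t)) continuous_const ?_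
  rw [closure_Ioo hlt.ne]
  exact ⟨hts, hst.le⟩

end Corrected

namespace CharacteristicContour

variable {lam : ℝ} (S : CharacteristicContour lam)

/-- The solution `∫₀ᵗ E(s - 1, t - τ) g(τ) dτ` of the rotated kernel equation with source `lam g`
and zero data on `t = 0` and on `s = 1`, where `E` is the Duhamel kernel. -/
def duhamel (g : ℝ → ℝ) : ℝ → ℝ → ℝ := volterra (fun s => S.duhamelKernel (s - 1)) g

variable {S} {g : ℝ → ℝ} {G : ℝ → ℝ → ℝ}

theorem contDiff_duhamelKernel_sub_one (n : ℕ) :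
    ContDiff ℝ n (uncurry fun s => S.duhamelKernel (s - 1)) :=
  (S.contDiff_duhamelKernel n).comp
    (f := fun q : ℝ × ℝ => (q.1 - 1, q.2)) (by fun_prop)

theorem contDiff_duhamel {n : ℕ} (hg : ContDiff ℝ n g) : ContDiff ℝ n (uncurry (S.duhamel g)) :=
  contDiff_volterra (contDiff_duhamelKernel_sub_one n) hg

theorem duhamel_kernelEquation (hg : Continuous g) (s t : ℝ) :
    2 * pdx (pdx (pdx (S.duhamel g))) s t + 6 * pdx (pdy (pdy (S.duhamel g))) s t +
      2 * pdx (S.duhamel g) s t = lam * (S.duhamel g s t + g t) := by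
  refine volterra_kernelEquation (contDiff_duhamelKernel_sub_one 3) hg (fun s t => ?_)
    (fun s => S.duhamelKernel_right_zero (s - 1))
    (fun s => S.pdy_duhamelKernel_right_zero (s - 1)) s t
  simp only [pdx_comp_sub_const, pdy_comp_sub_const]
  exact S.duhamelKernel_kernelEquation (s - 1) t

theorem duhamel_right_zero (s : ℝ) : S.duhamel g s 0 = 0 := volterra_right_zero s

theorem pdy_duhamel_right_zero (hg : Continuous g) (s : ℝ) : pdy (S.duhamel g) s 0 = 0 := by
  rw [duhamel, pdy_volterra (contDiff_duhamelKernel_sub_one 1) hg]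
  simp only [S.duhamelKernel_right_zero, volterra_right_zero, zero_mul, add_zero]

theorem duhamel_one (t : ℝ) : S.duhamel g 1 t = 0 := by
  simp only [duhamel, volterra, sub_self, S.duhamelKernel_left_zero, zero_mul,
    intervalIntegral.integral_zero]

theorem eq_duhamel_slice_one_add (hG : ContDiff ℝ 3 (uncurry G))
    (heq : ∀ s t, 0 ≤ t → t < s → s < 2 - t →
      2 * pdx (pdx (pdx G)) s t + 6 * pdx (pdy (pdy G)) s t + 2 * pdx G s t = lam * G s t)
    (h0 : ∀ s ∈ Ioo (0 : ℝ) 2, G s 0 = 0) (h1 : ∀ s ∈ Ioo (0 : ℝ) 2, pdy G s 0 = 0)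
    {s t : ℝ} (ht : 0 ≤ t) (hts : t ≤ s) (hst : s < 2 - t) :
    G s t = S.duhamel (G 1) s t + G 1 t := by
  have hg : ContDiff ℝ 3 (G 1) := hG.comp (contDiff_prodMk_right 1)
  have hV : ContDiff ℝ 3 (uncurry (S.duhamel (G 1))) := contDiff_duhamel hg
  have hG1 : Differentiable ℝ (uncurry G) := hG.differentiable three_ne_zero
  have hV1 : Differentiable ℝ (uncurry (S.duhamel (G 1))) := hV.differentiable three_ne_zero
  have hGyy : ContDiff ℝ 1 (uncurry (pdy (pdy G))) :=
    contDiff_pdy (m := 1) (contDiff_pdy (m := 2) hG (by norm_num)) (by norm_num)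
  have hVyy : ContDiff ℝ 1 (uncurry (pdy (pdy (S.duhamel (G 1))))) :=
    contDiff_pdy (m := 1) (contDiff_pdy (m := 2) hV (by norm_num)) (by norm_num)
  have hY := eq_slice_one (lam := lam) (Y := G - S.duhamel (G 1)) (hG.sub hV)
    (fun s t ht hts hst => ?_) (fun s hs => ?_) (fun s hs => ?_) ht hts hst
  · simp only [Pi.sub_apply, duhamel_one, sub_zero] at hY
    linear_combination hY
  · rw [pdx_pdx_pdx_sub hG hV, pdy_pdy_sub (hG.of_le (by norm_num)) (hV.of_le (by norm_num)),
      pdx_sub (hGyy.differentiable one_ne_zero) (hVyy.differentiable one_ne_zero), pdx_sub hG1 hV1]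
    simp only [Pi.sub_apply, duhamel_one, sub_zero]
    linear_combination heq s t ht hts hst - S.duhamel_kernelEquation hg.continuous s t
  · simp only [Pi.sub_apply, h0 s hs, duhamel_right_zero, sub_zero]
  · rw [pdy_sub hG1 hV1]
    simp only [Pi.sub_apply, h1 s hs, pdy_duhamel_right_zero hg.continuous, sub_zero]

end CharacteristicContour

section Homogeneous

variable {lam : ℝ} {G : ℝ → ℝ → ℝ}

theorem rotatedKernelEquation_unique (hG : ContDiff ℝ 3 (uncurry G))
    (heq : ∀ s t, 0 ≤ t → t < s → s < 2 - t →
      2 * pdx (pdx (pdx G)) s t + 6 * pdx (pdy (pdy G)) s t + 2 * pdx G s t = lam * G s t)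
    (h0 : ∀ s ∈ Ioo (0 : ℝ) 2, G s 0 = 0) (h1 : ∀ s ∈ Ioo (0 : ℝ) 2, pdy G s 0 = 0)
    (hdiag : ∀ t ∈ Ico (0 : ℝ) 1, G t t = 0) {s t : ℝ} (ht : 0 ≤ t) (hts : t ≤ s)
    (hst : s < 2 - t) : G s t = 0 := by
  obtain ⟨S⟩ := nonempty_characteristicContour lam
  have hrepr {s t : ℝ} (ht : 0 ≤ t) (hts : t ≤ s) (hst : s < 2 - t) :=
    S.eq_duhamel_slice_one_add hG heq h0 h1 ht hts hst
  have hk : Continuous (uncurry fun t τ => -S.duhamelKernel (t - 1) (t - τ)) :=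
    ((S.contDiff_duhamelKernel 0).continuous.comp
      (f := fun q : ℝ × ℝ => (q.1 - 1, q.1 - q.2)) (by fun_prop)).neg
  have htrace : ∀ t ∈ Ico (0 : ℝ) 1, G 1 t = 0 := by
    refine eq_zero_of_eq_volterra hk (hG.continuous.comp (Continuous.prodMk_right 1)) fun t ht => ?_
    have hdiag_repr := hrepr ht.1 le_rfl (by linarith [ht.2])
    rw [hdiag t ht, CharacteristicContour.duhamel, volterra] at hdiag_repr
    simp only [neg_mul, intervalIntegral.integral_neg]
    linear_combination -hdiag_repr
  have ht1 : t < 1 := by linarith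
  have hduhamel : S.duhamel (G 1) s t = 0 := by
    refine (intervalIntegral.integral_congr (g := 0) fun τ hτ => ?_).trans
      intervalIntegral.integral_zero
    rw [uIcc_of_le ht] at hτ
    simp only [htrace τ ⟨hτ.1, hτ.2.trans_lt ht1⟩, mul_zero, Pi.zero_apply]
  rw [hrepr ht hts hst, hduhamel, htrace t ⟨ht, ht1⟩, add_zero]

end Homogeneous

theorem eq_rotated (f : ℝ → ℝ → ℝ) (x y : ℝ) : f x y = rotated f (x + y) (y - x) := by
  simp only [rotated]
  congr 1 <;> ring

section Difference

variable {lam : ℝ} {d : ℝ → ℝ → ℝ}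

theorem eq_zero_of_homogeneous_of_lt_one (hd : ContDiff ℝ 3 (uncurry d))
    (heq : ∀ x y, (x, y) ∈ T →
      pdx (pdx (pdx d)) x y + pdy (pdy (pdy d)) x y + pdx d x y + pdy d x y = lam * d x y)
    (hdiag : ∀ x ∈ Icc (0 : ℝ) 1, d x x = 0) (hdx : ∀ x ∈ Icc (0 : ℝ) 1, pdx d x x = 0)
    (hleft : ∀ y ∈ Icc (0 : ℝ) 1, d 0 y = 0) {x y : ℝ} (hx : 0 ≤ x) (hxy : x ≤ y) (hy : y < 1) :
    d x y = 0 := by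
  have hd1 : Differentiable ℝ (uncurry d) := hd.differentiable three_ne_zero
  have h0 : ∀ s ∈ Ioo (0 : ℝ) 2, rotated d s 0 = 0 := fun s hs => by
    simp only [rotated, sub_zero, add_zero]
    exact hdiag _ ⟨by linarith [hs.1], by linarith [hs.2]⟩
  rw [eq_rotated d]
  refine rotatedKernelEquation_unique (contDiff_rotated hd)
    (fun s t ht hts hst => kernelEquation_rotated hd (heq _ _ ⟨?_, ?_, ?_⟩)) h0 (fun s hs => ?_)
    (fun t ht => ?_) (by linarith) (by linarith) (by linarith)
  iterate 3 dsimp only; linarith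
  · have hpdx := congrFun₂ (rotated_pdx hd1) s 0
    rw [Pi.sub_apply, Pi.sub_apply, pdx_eq_zero_of_forall_mem_Ioo h0 s hs, zero_sub, rotated,
      sub_zero, add_zero, hdx _ ⟨by linarith [hs.1], by linarith [hs.2]⟩] at hpdx
    exact neg_eq_zero.1 hpdx.symm
  · rw [rotated, sub_self, zero_div, add_self_div_two]
    exact hleft t ⟨ht.1, ht.2.le⟩

theorem eq_zero_of_homogeneous (hd : ContDiff ℝ 3 (uncurry d))
    (heq : ∀ x y, (x, y) ∈ T →
      pdx (pdx (pdx d)) x y + pdy (pdy (pdy d)) x y + pdx d x y + pdy d x y = lam * d x y)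
    (hdiag : ∀ x ∈ Icc (0 : ℝ) 1, d x x = 0) (hdx : ∀ x ∈ Icc (0 : ℝ) 1, pdx d x x = 0)
    (hleft : ∀ y ∈ Icc (0 : ℝ) 1, d 0 y = 0) {x y : ℝ} (hxy : (x, y) ∈ T) : d x y = 0 := by
  obtain ⟨hx, hle, hy⟩ := hxy
  dsimp only at hx hle hy
  obtain rfl | hx1 := (hle.trans hy).eq_or_lt
  · obtain rfl : y = 1 := le_antisymm hy hle
    exact hdiag 1 (right_mem_Icc.2 zero_le_one)
  have hopen : EqOn (d x) 0 (Ico x 1) := fun y hy =>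
    eq_zero_of_homogeneous_of_lt_one hd heq hdiag hdx hleft hx hy.1 hy.2
  refine hopen.closure (hd.continuous.comp (Continuous.prodMk_right x)) continuous_const ?_
  rw [closure_Ico hx1.ne]
  exact ⟨hle, hy⟩

end Difference

theorem IsObserverKernel.unique {lam : ℝ} {p p' : ℝ → ℝ → ℝ} (hp : IsObserverKernel lam p)
    (hp' : IsObserverKernel lam p') {x y : ℝ} (hxy : (x, y) ∈ T) : p' x y = p x y := by
  obtain ⟨hC, heq, hdiag, hdx, hleft⟩ := hp
  obtain ⟨hC', heq', hdiag', hdx', hleft'⟩ := hp'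
  have hd : Differentiable ℝ (uncurry p) := hC.differentiable three_ne_zero
  have hd' : Differentiable ℝ (uncurry p') := hC'.differentiable three_ne_zero
  have hpdx := pdx_sub hd' hd
  refine sub_eq_zero.1 (eq_zero_of_homogeneous (lam := lam) (d := p' - p) (hC'.sub hC)
    (fun x y hxy => ?_) (fun x hx => ?_) (fun x hx => ?_) (fun y hy => ?_) hxy)
  · have hyy : ContDiff ℝ 1 (uncurry (pdy (pdy p))) :=
      contDiff_pdy (m := 1) (contDiff_pdy (m := 2) hC (by norm_num)) (by norm_num)
    have hyy' : ContDiff ℝ 1 (uncurry (pdy (pdy p'))) :=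
      contDiff_pdy (m := 1) (contDiff_pdy (m := 2) hC' (by norm_num)) (by norm_num)
    rw [pdx_pdx_pdx_sub hC' hC, pdy_pdy_sub (hC'.of_le (by norm_num)) (hC.of_le (by norm_num)),
      pdy_sub (hyy'.differentiable one_ne_zero) (hyy.differentiable one_ne_zero), hpdx,
      pdy_sub hd' hd]
    simp only [Pi.sub_apply]
    linear_combination heq' x y hxy - heq x y hxy
  · simp only [Pi.sub_apply, hdiag x hx, hdiag' x hx, sub_zero]
  · simp only [hpdx, Pi.sub_apply, hdx x hx, hdx' x hx, sub_self]
  · simp only [Pi.sub_apply, hleft y hy, hleft' y hy, sub_zero]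

theorem observer_kernel_exists_unique_general (lam : ℝ) :
    ∃ p : ℝ → ℝ → ℝ, IsObserverKernel lam p ∧
      ∀ p' : ℝ → ℝ → ℝ, IsObserverKernel lam p' →
        ∀ x y : ℝ, (x, y) ∈ T → p' x y = p x y := by
  obtain ⟨S⟩ := nonempty_characteristicContour lam
  exact ⟨S.observer, S.isObserverKernel_observer,
    fun _ h _ _ => S.isObserverKernel_observer.unique h⟩

/-- Existence and uniqueness (as a function on `T`) of the observer kernel. -/
theorem observer_kernel_exists_unique (lam : ℝ) (hlam : 0 < lam) :
    ∃ p : ℝ → ℝ → ℝ, IsObserverKernel lam p ∧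
      ∀ p' : ℝ → ℝ → ℝ, IsObserverKernel lam p' →
        ∀ x y : ℝ, (x, y) ∈ T → p' x y = p x y :=
  observer_kernel_exists_unique_general lam
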